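/- Let T : ℝ^d → ℝ^d be γ-contractive with respect to a norm ‖·‖_c with fixed point θ*, suppose T is g∘F decomposable at θ*, and let (w_t)_{t≥0} be i.i.d. zero-mean ℝ^d-valued random vectors with E‖w₀‖⁴ < ∞. For α > 0 small enough, let μ_α be the unique stationary probability measure with finite second moment of the SA Markov kernel with stepsize α, and let ν_α be the pushforward of μ_α under x ↦ (x − θ*)/√α. Then there exists a unique probability measure ν on ℝ^d with finite second moment, depending on the law of the noise only through T and the covariance matrix Var(w₀), such that lim_{α→0⁺} W₂(ν_α, ν) = 0 (W₂ with respect to ‖·‖_c). Consequently, lim_{α→0⁺} (1/√α) ‖ ∫x dμ_α(x) − θ* − √α ∫y dν(y) ‖ = 0, i.e., the mean of μ_α equals θ* + √α ∫y dν(y) + o(√α). -/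

import Mathlib

open MeasureTheory ProbabilityTheory Filter Topology

noncomputable section

/-- A function on `ℝ^d` satisfying the axioms of a norm. -/
structure IsNormLike {V : Type*} [AddCommGroup V] [Module ℝ V] (c : V → ℝ) : Prop where
  add_le : ∀ x y, c (x + y) ≤ c x + c y
  smul_eq : ∀ (r : ℝ) (x : V), c (r • x) = |r| * c x
  pos : ∀ x, x ≠ 0 → 0 < c x

/-- `π` is a coupling of `μ` and `ν`. -/
def IsCoupling {X : Type*} [MeasurableSpace X] (π : Measure (X × X)) (μ ν : Measure X) : Prop :=
  π.map Prod.fst = μ ∧ π.map Prod.snd = ν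

/-- Squared Wasserstein-2 distance with respect to the norm-like function `c`. -/
def W2sq {X : Type*} [MeasurableSpace X] [AddGroup X] (c : X → ℝ) (μ ν : Measure X) : ℝ :=
  sInf { r : ℝ | ∃ π : Measure (X × X), IsCoupling π μ ν ∧
    Integrable (fun p => (c (p.1 - p.2)) ^ 2) π ∧ r = ∫ p, (c (p.1 - p.2)) ^ 2 ∂π }

/-- Wasserstein-2 distance with respect to the norm-like function `c`. -/
def W2dist {X : Type*} [MeasurableSpace X] [AddGroup X] (c : X → ℝ) (μ ν : Measure X) : ℝ :=
  Real.sqrt (W2sq c μ ν)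

/-- One step of the SA Markov kernel with stepsize `α` and noise distribution `νw`,
at the level of laws. -/
def saStep {d : ℕ} (T : EuclideanSpace ℝ (Fin d) → EuclideanSpace ℝ (Fin d)) (α : ℝ)
    (νw : Measure (EuclideanSpace ℝ (Fin d))) (μ : Measure (EuclideanSpace ℝ (Fin d))) :
    Measure (EuclideanSpace ℝ (Fin d)) :=
  Measure.map (fun p => p.1 + α • (T p.1 - p.1 + p.2)) (μ.prod νw)

open scoped ENNReal NNReal

set_option linter.unusedSectionVars false

namespace IsNormLike

section Basic

variable {V : Type*} [AddCommGroup V] [Module ℝ V] {c : V → ℝ}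

lemma map_zero (hc : IsNormLike c) : c 0 = 0 := by
  simpa using hc.smul_eq 0 0

lemma nonneg (hc : IsNormLike c) (x : V) : 0 ≤ c x := by
  by_cases hx : x = 0
  · simp [hx, hc.map_zero]
  · exact (hc.pos x hx).le

lemma map_neg (hc : IsNormLike c) (x : V) : c (-x) = c x := by
  simpa using hc.smul_eq (-1) x

lemma sub_le (hc : IsNormLike c) (x y : V) : c (x - y) ≤ c x + c y := by
  simpa [sub_eq_add_neg, hc.map_neg] using hc.add_le x (-y)

lemma map_sub_rev (hc : IsNormLike c) (x y : V) : c (x - y) = c (y - x) := by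
  rw [← hc.map_neg, neg_sub]

lemma smul_of_nonneg (hc : IsNormLike c) {r : ℝ} (hr : 0 ≤ r) (x : V) : c (r • x) = r * c x := by
  rw [hc.smul_eq, abs_of_nonneg hr]

lemma sum_le (hc : IsNormLike c) {ι : Type*} (s : Finset ι) (f : ι → V) :
    c (∑ i ∈ s, f i) ≤ ∑ i ∈ s, c (f i) :=
  Finset.le_sum_of_subadditive c hc.map_zero.le hc.add_le s f

end Basic

variable {E : Type*} [NormedAddCommGroup E] [NormedSpace ℝ E] {c : E → ℝ}

lemma of_norm : IsNormLike (fun x : E => ‖x‖) where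
  add_le := norm_add_le
  smul_eq r x := by simp [norm_smul]
  pos x hx := norm_pos_iff.2 hx

variable [FiniteDimensional ℝ E]

lemma exists_le_norm (hc : IsNormLike c) : ∃ K, 0 < K ∧ ∀ x, c x ≤ K * ‖x‖ := by
  let b := Module.finBasis ℝ E
  let e : E →L[ℝ] (Fin (Module.finrank ℝ E) → ℝ) :=
    LinearMap.toContinuousLinearMap (b.equivFun : E →ₗ[ℝ] _)
  refine ⟨‖e‖ * (∑ i, c (b i)) + 1, ?_, fun x => ?_⟩
  · have := Finset.sum_nonneg fun i (_ : i ∈ Finset.univ) => hc.nonneg (b i)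
    positivity
  · calc c x = c (∑ i, b.repr x i • b i) := by rw [b.sum_repr]
      _ ≤ ∑ i, c (b.repr x i • b i) := hc.sum_le _ _
      _ ≤ ∑ i, (‖e‖ * ‖x‖) * c (b i) := by
        refine Finset.sum_le_sum fun i _ => ?_
        rw [hc.smul_eq]
        refine mul_le_mul_of_nonneg_right ?_ (hc.nonneg _)
        exact (norm_le_pi_norm (e x) i).trans (e.le_opNorm x)
      _ ≤ (‖e‖ * (∑ i, c (b i)) + 1) * ‖x‖ := by
        rw [← Finset.mul_sum]
        nlinarith [norm_nonneg x]

lemma continuous (hc : IsNormLike c) : Continuous c := by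
  obtain ⟨K, hK, h⟩ := hc.exists_le_norm
  refine (LipschitzWith.of_le_add_mul (K := ⟨K, hK.le⟩) fun x y => ?_).continuous
  have h1 := hc.add_le y (x - y)
  have h2 := h (x - y)
  rw [add_sub_cancel] at h1
  rw [dist_eq_norm]
  exact h1.trans (by gcongr; exact h2)

lemma exists_norm_le (hc : IsNormLike c) : ∃ K, 0 < K ∧ ∀ x, ‖x‖ ≤ K * c x := by
  by_cases hE : Nontrivial E
  · obtain ⟨x₀, hx₀, hmin⟩ := (isCompact_sphere (0 : E) 1).exists_isMinOn
      (NormedSpace.sphere_nonempty.2 zero_le_one) hc.continuous.continuousOn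
    have hx₀' : x₀ ≠ 0 := by
      rintro rfl
      simp at hx₀
    have hp := hc.pos _ hx₀'
    refine ⟨(c x₀)⁻¹, by positivity, fun x => ?_⟩
    by_cases hx : x = 0
    · simp [hx, hc.map_zero]
    have hx' : 0 < ‖x‖ := norm_pos_iff.2 hx
    have h1 : c x₀ ≤ c (‖x‖⁻¹ • x) := hmin (by simp [norm_smul, hx'.ne'])
    rw [hc.smul_of_nonneg (by positivity)] at h1
    rw [inv_mul_eq_div, le_div_iff₀ hp]
    calc ‖x‖ * c x₀ ≤ ‖x‖ * (‖x‖⁻¹ * c x) := by gcongr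
      _ = c x := by field_simp
  · rw [not_nontrivial_iff_subsingleton] at hE
    refine ⟨1, one_pos, fun x => ?_⟩
    simp [Subsingleton.elim x 0, hc.map_zero]

end IsNormLike

/-- The `Lᵖ` norm of `c ∘ X` is at most `r`. -/
def LpBound {Ω V : Type*} [MeasurableSpace Ω] (p : ℝ≥0∞) (c : V → ℝ) (P : Measure Ω)
    (X : Ω → V) (r : ℝ) : Prop :=
  eLpNorm (fun ω => c (X ω)) p P ≤ ENNReal.ofReal r

namespace LpBound

variable {Ω Ω' E : Type*} [MeasurableSpace Ω] [MeasurableSpace Ω'] {P : Measure Ω}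
  {p : ℝ≥0∞} {c : E → ℝ} {X Y Z : Ω → E} {r s : ℝ}

lemma mono_bound (h : LpBound p c P X r) (hrs : r ≤ s) : LpBound p c P X s :=
  le_trans h (ENNReal.ofReal_le_ofReal hrs)

lemma of_forall_pos (h : ∀ η > 0, LpBound p c P X (r + η)) : LpBound p c P X r := by
  have ht : Tendsto (fun η : ℝ => ENNReal.ofReal (r + η)) (𝓝[>] 0) (𝓝 (ENNReal.ofReal r)) := by
    have : Tendsto (fun η : ℝ => r + η) (𝓝[>] 0) (𝓝 (r + 0)) :=
      (tendsto_const_nhds.add tendsto_id).mono_left nhdsWithin_le_nhds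
    rw [add_zero] at this
    exact (ENNReal.continuous_ofReal.tendsto r).comp this
  exact ge_of_tendsto ht (eventually_mem_nhdsWithin.mono fun η hη => h η hη)

lemma map_iff [MeasurableSpace E] {f : Ω' → Ω} {P : Measure Ω'} (hf : Measurable f)
    (hX : Measurable X) (hcm : Measurable c) :
    LpBound p c (P.map f) X r ↔ LpBound p c P (fun ω => X (f ω)) r := by
  rw [LpBound, LpBound, eLpNorm_map_measure (g := fun ω => c (X ω))
    (hcm.comp hX).aestronglyMeasurable hf.aemeasurable]
  rfl

lemma of_map_eq [MeasurableSpace E] {f : Ω' → Ω} {P' : Measure Ω'} (hf : Measurable f)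
    (hX : Measurable X) (hcm : Measurable c) (h : P'.map f = P) (hb : LpBound p c P X r) :
    LpBound p c P' (fun ω => X (f ω)) r := by
  rw [← map_iff hf hX hcm, h]
  exact hb

variable [NormedAddCommGroup E] [NormedSpace ℝ E]

lemma mono (hc : IsNormLike c) (h : LpBound p c P Y r) (hXY : ∀ ω, c (X ω) ≤ c (Y ω)) :
    LpBound p c P X r := by
  refine (eLpNorm_mono fun ω => ?_).trans h
  rw [Real.norm_of_nonneg (hc.nonneg _), Real.norm_of_nonneg (hc.nonneg _)]
  exact hXY ω

lemma smul (hc : IsNormLike c) (h : LpBound p c P X r) (a : ℝ) :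
    LpBound p c P (fun ω => a • X ω) (|a| * r) := by
  have : (fun ω => c (a • X ω)) = |a| • fun ω => c (X ω) := by
    ext ω
    simp [hc.smul_eq]
  rw [LpBound, this, eLpNorm_const_smul, ENNReal.ofReal_mul (abs_nonneg a),
    Real.enorm_eq_ofReal_abs, abs_abs]
  gcongr
  exact h

lemma natCast_iff_lintegral {n : ℕ} (hn : n ≠ 0) (hc : IsNormLike c) (hr : 0 ≤ r) :
    LpBound n c P X r ↔ ∫⁻ ω, ENNReal.ofReal (c (X ω) ^ n) ∂P ≤ ENNReal.ofReal (r ^ n) := by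
  have h1 : ∫⁻ ω, ENNReal.ofReal (c (X ω) ^ n) ∂P = eLpNorm (fun ω => c (X ω)) n P ^ n := by
    rw [eLpNorm_eq_lintegral_rpow_enorm_toReal (by simpa using hn) (by simp)]
    simp only [ENNReal.toReal_natCast, ENNReal.rpow_natCast, one_div]
    rw [← ENNReal.rpow_natCast, ← ENNReal.rpow_mul,
      inv_mul_cancel₀ (Nat.cast_ne_zero.2 hn), ENNReal.rpow_one]
    refine lintegral_congr fun ω => ?_
    rw [Real.enorm_of_nonneg (hc.nonneg _), ENNReal.ofReal_pow (hc.nonneg _)]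
  rw [h1, ENNReal.ofReal_pow hr, LpBound]
  exact (ENNReal.pow_le_pow_left_iff hn).symm

lemma two_iff_lintegral (hc : IsNormLike c) (hr : 0 ≤ r) :
    LpBound 2 c P X r ↔ ∫⁻ ω, ENNReal.ofReal (c (X ω) ^ 2) ∂P ≤ ENNReal.ofReal (r ^ 2) := by
  exact_mod_cast natCast_iff_lintegral two_ne_zero hc hr

lemma four_iff_lintegral (hc : IsNormLike c) (hr : 0 ≤ r) :
    LpBound 4 c P X r ↔ ∫⁻ ω, ENNReal.ofReal (c (X ω) ^ 4) ∂P ≤ ENNReal.ofReal (r ^ 4) := by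
  exact_mod_cast natCast_iff_lintegral four_ne_zero hc hr

variable [FiniteDimensional ℝ E] [MeasurableSpace E] [BorelSpace E]

/-- Minkowski's inequality in a form where `c (X ω) ≤ a c (Y ω) + b c (Z ω)`. -/
lemma of_le_add (hp : 1 ≤ p) (hc : IsNormLike c) (hY : LpBound p c P Y r) (hZ : LpBound p c P Z s)
    (hYm : Measurable Y) (hZm : Measurable Z) {a b : ℝ} (ha : 0 ≤ a) (hb : 0 ≤ b)
    (hr : 0 ≤ r) (hs : 0 ≤ s) (h : ∀ ω, c (X ω) ≤ a * c (Y ω) + b * c (Z ω)) :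
    LpBound p c P X (a * r + b * s) := by
  have hcm := hc.continuous.measurable
  have hY' := hY.smul hc a
  have hZ' := hZ.smul hc b
  rw [abs_of_nonneg ha] at hY'
  rw [abs_of_nonneg hb] at hZ'
  calc eLpNorm (fun ω => c (X ω)) p P
      ≤ eLpNorm ((fun ω => c (a • Y ω)) + fun ω => c (b • Z ω)) p P := by
        refine eLpNorm_mono_real fun ω => ?_
        rw [Real.norm_of_nonneg (hc.nonneg _), Pi.add_apply, hc.smul_of_nonneg ha,
          hc.smul_of_nonneg hb]
        exact h ω
    _ ≤ eLpNorm (fun ω => c (a • Y ω)) p P + eLpNorm (fun ω => c (b • Z ω)) p P :=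
        eLpNorm_add_le (hcm.comp (hYm.const_smul a)).aestronglyMeasurable
          (hcm.comp (hZm.const_smul b)).aestronglyMeasurable hp
    _ ≤ ENNReal.ofReal (a * r) + ENNReal.ofReal (b * s) := add_le_add hY' hZ'
    _ = ENNReal.ofReal (a * r + b * s) := (ENNReal.ofReal_add (by positivity) (by positivity)).symm

lemma add (hp : 1 ≤ p) (hc : IsNormLike c) (hY : LpBound p c P Y r) (hZ : LpBound p c P Z s)
    (hYm : Measurable Y) (hZm : Measurable Z) (hr : 0 ≤ r) (hs : 0 ≤ s) :
    LpBound p c P (fun ω => Y ω + Z ω) (r + s) := by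
  have := of_le_add (X := fun ω => Y ω + Z ω) hp hc hY hZ hYm hZm zero_le_one zero_le_one hr hs
    fun ω => by simpa using hc.add_le _ _
  simpa using this

lemma sub (hp : 1 ≤ p) (hc : IsNormLike c) (hY : LpBound p c P Y r) (hZ : LpBound p c P Z s)
    (hYm : Measurable Y) (hZm : Measurable Z) (hr : 0 ≤ r) (hs : 0 ≤ s) :
    LpBound p c P (fun ω => Y ω - Z ω) (r + s) := by
  have := of_le_add (X := fun ω => Y ω - Z ω) hp hc hY hZ hYm hZm zero_le_one zero_le_one hr hs
    fun ω => by simpa using hc.sub_le _ _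
  simpa using this

end LpBound

namespace IsCoupling

variable {E : Type*} [MeasurableSpace E] {π π' : Measure (E × E)} {μ ν ρ : Measure E}

lemma isProbabilityMeasure [IsProbabilityMeasure μ] (h : IsCoupling π μ ν) :
    IsProbabilityMeasure π := by
  have : IsProbabilityMeasure (π.map Prod.fst) := by rw [h.1]; infer_instance
  exact Measure.isProbabilityMeasure_of_map Prod.fst

lemma swap (h : IsCoupling π μ ν) : IsCoupling (π.map Prod.swap) ν μ := by
  constructor
  · rw [Measure.map_map measurable_fst measurable_swap]
    exact h.2
  · rw [Measure.map_map measurable_snd measurable_swap]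
    exact h.1

/-- Gluing two couplings along their common marginal. -/
lemma exists_glue [StandardBorelSpace E] [Nonempty E] [IsProbabilityMeasure μ]
    [IsProbabilityMeasure ν] (h : IsCoupling π μ ν) (h' : IsCoupling π' ν ρ) :
    ∃ Q : Measure ((E × E) × E), Q.map Prod.fst = π ∧ Q.map (fun q => (q.1.2, q.2)) = π' := by
  have := h.isProbabilityMeasure
  have := h'.isProbabilityMeasure
  refine ⟨π ⊗ₘ π'.condKernel.comap Prod.snd measurable_snd, Measure.fst_compProd _ _, ?_⟩
  refine Measure.ext_of_lintegral _ fun f hf => ?_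
  have hm : Measurable fun q : (E × E) × E => (q.1.2, q.2) := by fun_prop
  conv_rhs => rw [← π'.disintegrate π'.condKernel]
  rw [lintegral_map hf hm,
    Measure.lintegral_compProd (f := fun q : (E × E) × E => f (q.1.2, q.2)) (hf.comp hm),
    Measure.lintegral_compProd hf, Measure.fst, h'.1, ← h.2,
    lintegral_map (by fun_prop) measurable_snd]
  simp

end IsCoupling

/-- There is a coupling of `μ` and `ν` whose transport cost in `L²` is at most `r`. -/
def Near {E : Type*} [MeasurableSpace E] [AddGroup E] (c : E → ℝ) (μ ν : Measure E) (r : ℝ) :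
    Prop :=
  ∃ π : Measure (E × E), IsCoupling π μ ν ∧ LpBound 2 c π (fun p => p.1 - p.2) r

namespace Near

variable {E Ω : Type*} [NormedAddCommGroup E] [NormedSpace ℝ E] [FiniteDimensional ℝ E]
  [MeasurableSpace E] [BorelSpace E] [MeasurableSpace Ω] {c c' : E → ℝ} {μ ν ρ : Measure E}
  {r s : ℝ}

lemma mono_bound (h : Near c μ ν r) (hrs : r ≤ s) : Near c μ ν s := by
  obtain ⟨π, h1, h2⟩ := h
  exact ⟨π, h1, h2.mono_bound hrs⟩

lemma of_le_mul (hc : IsNormLike c) (hc' : IsNormLike c') {K : ℝ} (hK : 0 ≤ K)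
    (hcc' : ∀ x, c' x ≤ K * c x) (h : Near c μ ν r) : Near c' μ ν (K * r) := by
  obtain ⟨π, h1, h2⟩ := h
  refine ⟨π, h1, ?_⟩
  have h3 := h2.smul hc K
  rw [abs_of_nonneg hK] at h3
  refine (eLpNorm_mono fun ω => ?_).trans h3
  rw [Real.norm_of_nonneg (hc'.nonneg _), Real.norm_of_nonneg (hc.nonneg _),
    hc.smul_of_nonneg hK]
  exact hcc' _

lemma of_map (hc : IsNormLike c) {P : Measure Ω} {X Y : Ω → E} (hX : Measurable X)
    (hY : Measurable Y) (h : LpBound 2 c P (fun ω => X ω - Y ω) r) :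
    Near c (P.map X) (P.map Y) r := by
  refine ⟨P.map fun ω => (X ω, Y ω), ⟨?_, ?_⟩, ?_⟩
  · rw [Measure.map_map measurable_fst (hX.prodMk hY)]; rfl
  · rw [Measure.map_map measurable_snd (hX.prodMk hY)]; rfl
  · rwa [LpBound.map_iff (hX.prodMk hY) (by fun_prop) hc.continuous.measurable]

lemma symm (hc : IsNormLike c) (h : Near c μ ν r) : Near c ν μ r := by
  obtain ⟨π, h1, h2⟩ := h
  refine ⟨_, h1.swap, ?_⟩
  rw [LpBound.map_iff measurable_swap (by fun_prop) hc.continuous.measurable]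
  exact h2.mono hc fun ω => (hc.map_sub_rev _ _).le

lemma trans [IsProbabilityMeasure μ] [IsProbabilityMeasure ν] (hc : IsNormLike c)
    (h : Near c μ ν r) (h' : Near c ν ρ s) (hr : 0 ≤ r) (hs : 0 ≤ s) : Near c μ ρ (r + s) := by
  obtain ⟨π, h1, h2⟩ := h
  obtain ⟨π', h1', h2'⟩ := h'
  obtain ⟨Q, hQ, hQ'⟩ := h1.exists_glue h1'
  have hm : Measurable fun q : (E × E) × E => (q.1.2, q.2) := by fun_prop
  have hcm := hc.continuous.measurable
  have hμ : Q.map (fun q => q.1.1) = μ := by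
    rw [← h1.1, ← hQ, Measure.map_map measurable_fst measurable_fst]; rfl
  have hρ : Q.map (fun q => q.2) = ρ := by
    rw [← h1'.2, ← hQ', Measure.map_map measurable_snd hm]; rfl
  rw [← hμ, ← hρ]
  refine of_map hc (by fun_prop) (by fun_prop) ?_
  have b1 := LpBound.of_map_eq measurable_fst (by fun_prop) hcm hQ h2
  have b2 := LpBound.of_map_eq hm (by fun_prop) hcm hQ' h2'
  refine (b1.add one_le_two hc b2 (by fun_prop) (by fun_prop) hr hs).mono hc fun ω => ?_
  simp

/-- Measures with finite second moment are at finite distance from each other. -/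
lemma exists_of_integrable [IsProbabilityMeasure μ] [IsProbabilityMeasure ν] (hc : IsNormLike c)
    (hμ : LpBound 2 c μ id r) (hν : LpBound 2 c ν id s) (hr : 0 ≤ r) (hs : 0 ≤ s) :
    Near c μ ν (r + s) := by
  have hcm := hc.continuous.measurable
  have h1 : (μ.prod ν).map Prod.fst = μ := by simp
  have h2 : (μ.prod ν).map Prod.snd = ν := by simp
  refine ⟨μ.prod ν, ⟨h1, h2⟩, ?_⟩
  have b1 : LpBound 2 c (μ.prod ν) (fun p => p.1) r :=
    LpBound.of_map_eq (f := Prod.fst) (X := id) measurable_fst measurable_id hcm h1 hμ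
  have b2 : LpBound 2 c (μ.prod ν) (fun p => p.2) s :=
    LpBound.of_map_eq (f := Prod.snd) (X := id) measurable_snd measurable_id hcm h2 hν
  exact b1.sub one_le_two hc b2 measurable_fst measurable_snd hr hs

lemma w2dist_le [IsProbabilityMeasure μ] (hc : IsNormLike c) (h : Near c μ ν r) (hr : 0 ≤ r) :
    W2dist c μ ν ≤ r := by
  obtain ⟨π, h1, h2⟩ := h
  have := h1.isProbabilityMeasure
  rw [LpBound.two_iff_lintegral hc hr] at h2
  have hcm := hc.continuous
  have hm : AEStronglyMeasurable (fun p : E × E => c (p.1 - p.2) ^ 2) π := by fun_prop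
  have hn : 0 ≤ᵐ[π] fun p : E × E => c (p.1 - p.2) ^ 2 := ae_of_all _ fun p => sq_nonneg _
  have hi : Integrable (fun p : E × E => c (p.1 - p.2) ^ 2) π :=
    (lintegral_ofReal_ne_top_iff_integrable hm hn).1 (h2.trans_lt ENNReal.ofReal_lt_top).ne
  refine Real.sqrt_le_iff.2 ⟨hr, ?_⟩
  rw [W2sq]
  refine csInf_le_of_le (b := ∫ p, c (p.1 - p.2) ^ 2 ∂π) ⟨0, ?_⟩ ⟨π, h1, hi, rfl⟩ ?_
  · rintro _ ⟨π', -, -, rfl⟩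
    exact integral_nonneg fun p => sq_nonneg _
  · rw [integral_eq_lintegral_of_nonneg_ae hn hm]
    exact ENNReal.toReal_le_of_le_ofReal (sq_nonneg r) h2

lemma of_w2dist_lt [IsProbabilityMeasure μ] (hc : IsNormLike c) (h0 : Near c μ ν s) (hs : 0 ≤ s)
    (h : W2dist c μ ν < r) : Near c μ ν r := by
  have hr : 0 ≤ r := (Real.sqrt_nonneg _).trans h.le
  obtain ⟨π, h1, h2⟩ := h0
  rw [LpBound.two_iff_lintegral hc hs] at h2
  have hcm := hc.continuous
  have hi : Integrable (fun p : E × E => c (p.1 - p.2) ^ 2) π :=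
    (lintegral_ofReal_ne_top_iff_integrable (by fun_prop) (ae_of_all _ fun p => sq_nonneg _)).1
      (h2.trans_lt ENNReal.ofReal_lt_top).ne
  rw [W2dist, Real.sqrt_lt' (lt_of_le_of_lt (Real.sqrt_nonneg _) h), W2sq] at h
  have key := (exists_lt_of_csInf_lt · h)
  obtain ⟨_, ⟨π', h1', hi', rfl⟩, hlt⟩ := key ⟨∫ p, c (p.1 - p.2) ^ 2 ∂π, π, h1, hi, rfl⟩
  refine ⟨π', h1', ?_⟩
  rw [LpBound.two_iff_lintegral hc hr,
    ← ofReal_integral_eq_lintegral_ofReal hi' (ae_of_all _ fun p => sq_nonneg _)]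
  exact ENNReal.ofReal_le_ofReal hlt.le

end Near

section WeakConvergence

variable {E : Type*} [NormedAddCommGroup E] [InnerProductSpace ℝ E] [FiniteDimensional ℝ E]
  [MeasurableSpace E] [BorelSpace E]

/-- Adding an independent centred vector adds its second moment. -/
lemma lintegral_norm_sq_add {ζ : Measure E} [IsProbabilityMeasure ζ] (h0 : ∫ z, z ∂ζ = 0)
    (h1 : Integrable (fun z => z) ζ) (h2 : Integrable (fun z => ‖z‖ ^ 2) ζ) (μ : Measure E)
    [SFinite μ] (a : ℝ) :
    ∫⁻ p, ENNReal.ofReal (‖p.1 + a • p.2‖ ^ 2) ∂(μ.prod ζ)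
      = ∫⁻ x, (ENNReal.ofReal (‖x‖ ^ 2) + ENNReal.ofReal (a ^ 2 * ∫ z, ‖z‖ ^ 2 ∂ζ)) ∂μ := by
  rw [lintegral_prod _ (by fun_prop)]
  refine lintegral_congr fun x => ?_
  have hx : ∀ z, ‖x + a • z‖ ^ 2 = ‖x‖ ^ 2 + (2 * a) * inner ℝ x z + a ^ 2 * ‖z‖ ^ 2 := by
    intro z
    rw [norm_add_sq_real, inner_smul_right, norm_smul, mul_pow, Real.norm_eq_abs, sq_abs]
    ring
  have hi1 : Integrable (fun z => (2 * a) * inner ℝ x z) ζ := (h1.const_inner x).const_mul _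
  have hi2 : Integrable (fun z => a ^ 2 * ‖z‖ ^ 2) ζ := h2.const_mul _
  have hi0 : Integrable (fun _ : E => ‖x‖ ^ 2) ζ := integrable_const _
  have hint : Integrable (fun z => ‖x + a • z‖ ^ 2) ζ := by
    simp_rw [hx]
    exact (hi0.add hi1).add hi2
  rw [← ofReal_integral_eq_lintegral_ofReal hint (ae_of_all _ fun z => by positivity)]
  simp_rw [hx]
  have hi01 : Integrable (fun z => ‖x‖ ^ 2 + (2 * a) * inner ℝ x z) ζ := hi0.add hi1
  rw [integral_add hi01 hi2, integral_add hi0 hi1, integral_const_mul,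
    integral_const_mul, integral_inner h1, h0, ← ENNReal.ofReal_add (by positivity)
      (mul_nonneg (sq_nonneg _) (integral_nonneg fun z => sq_nonneg _))]
  simp

/-- Two measures with a common part `κ` are coupled by leaving `κ` in place and taking the
product coupling of the remainders. -/
lemma near_of_common_part {κ μ ν : Measure E} [IsFiniteMeasure κ] [IsFiniteMeasure μ]
    [IsFiniteMeasure ν] (h : μ Set.univ = ν Set.univ) {r : ℝ} (hr : 0 ≤ r)
    (hb : 2 * ∫⁻ x, ENNReal.ofReal (‖x‖ ^ 2) ∂μ + 2 * ∫⁻ x, ENNReal.ofReal (‖x‖ ^ 2) ∂ν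
      ≤ ENNReal.ofReal (r ^ 2)) :
    Near (fun x : E => ‖x‖) (κ + μ) (κ + ν) r := by
  have hdiag : Measurable fun x : E => (x, x) := by fun_prop
  rcases eq_or_ne (μ Set.univ) 0 with h0 | h0
  · have hμ : μ = 0 := Measure.measure_univ_eq_zero.1 h0
    have hν : ν = 0 := Measure.measure_univ_eq_zero.1 (h ▸ h0)
    have := Near.of_map (c := fun x : E => ‖x‖) IsNormLike.of_norm (P := κ) (X := id) (Y := id)
      (r := r) measurable_id measurable_id (by simp [LpBound])
    simpa [hμ, hν] using this
  have htop : μ Set.univ ≠ ⊤ := measure_ne_top _ _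
  refine ⟨κ.map (fun x => (x, x)) + (μ Set.univ)⁻¹ • μ.prod ν, ⟨?_, ?_⟩, ?_⟩
  · rw [Measure.map_add _ _ measurable_fst, Measure.map_smul, Measure.map_map measurable_fst hdiag,
      Measure.map_fst_prod, ← h, smul_smul, ENNReal.inv_mul_cancel h0 htop, one_smul]
    congr 1
    exact Measure.map_id
  · rw [Measure.map_add _ _ measurable_snd, Measure.map_smul, Measure.map_map measurable_snd hdiag,
      Measure.map_snd_prod, smul_smul, ENNReal.inv_mul_cancel h0 htop, one_smul]
    congr 1
    exact Measure.map_id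
  · rw [LpBound.two_iff_lintegral IsNormLike.of_norm hr, lintegral_add_measure,
      lintegral_map (by fun_prop) hdiag, lintegral_smul_measure]
    have hpt : ∀ p : E × E, ENNReal.ofReal (‖p.1 - p.2‖ ^ 2)
        ≤ 2 * ENNReal.ofReal (‖p.1‖ ^ 2) + 2 * ENNReal.ofReal (‖p.2‖ ^ 2) := by
      intro p
      have h2 : (2 : ℝ≥0∞) = ENNReal.ofReal 2 := by simp
      rw [h2, ← ENNReal.ofReal_mul zero_le_two, ← ENNReal.ofReal_mul zero_le_two,
        ← ENNReal.ofReal_add (by positivity) (by positivity)]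
      refine ENNReal.ofReal_le_ofReal ?_
      have := norm_sub_le p.1 p.2
      nlinarith [sq_nonneg (‖p.1‖ - ‖p.2‖), norm_nonneg (p.1 - p.2)]
    have hle : ∫⁻ p, ENNReal.ofReal (‖p.1 - p.2‖ ^ 2) ∂(μ.prod ν) ≤ μ Set.univ *
        (2 * ∫⁻ x, ENNReal.ofReal (‖x‖ ^ 2) ∂μ + 2 * ∫⁻ x, ENNReal.ofReal (‖x‖ ^ 2) ∂ν) := by
      refine (lintegral_mono hpt).trans (le_of_eq ?_)
      rw [lintegral_prod _ (by fun_prop)]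
      simp only
      have : ∀ x : E, ∫⁻ y, (2 * ENNReal.ofReal (‖x‖ ^ 2) + 2 * ENNReal.ofReal (‖y‖ ^ 2)) ∂ν
          = 2 * ENNReal.ofReal (‖x‖ ^ 2) * ν Set.univ
            + 2 * ∫⁻ y, ENNReal.ofReal (‖y‖ ^ 2) ∂ν := by
        intro x
        rw [lintegral_add_left (by fun_prop), lintegral_const, lintegral_const_mul _ (by fun_prop)]
      simp_rw [this]
      rw [lintegral_add_left (by fun_prop), lintegral_const,
        lintegral_mul_const _ (by fun_prop), lintegral_const_mul _ (by fun_prop), h]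
      ring
    simp only [sub_self, norm_zero, ne_eq, OfNat.ofNat_ne_zero, not_false_eq_true, zero_pow,
      ENNReal.ofReal_zero, lintegral_const, zero_mul, zero_add, smul_eq_mul]
    refine le_trans ?_ hb
    calc (μ Set.univ)⁻¹ * ∫⁻ p, ENNReal.ofReal (‖p.1 - p.2‖ ^ 2) ∂(μ.prod ν)
        ≤ (μ Set.univ)⁻¹ * (μ Set.univ * (2 * ∫⁻ x, ENNReal.ofReal (‖x‖ ^ 2) ∂μ
          + 2 * ∫⁻ x, ENNReal.ofReal (‖x‖ ^ 2) ∂ν)) := by gcongr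
      _ = _ := by rw [← mul_assoc, ENNReal.inv_mul_cancel h0 htop, one_mul]

/-- Measures whose densities converge pointwise, together with their second moments, are
eventually close in Wasserstein distance. -/
lemma eventually_near_withDensity {lam : Measure E} {f : ℕ → E → ℝ≥0∞} {g : E → ℝ≥0∞}
    (hf : ∀ k, Measurable (f k)) (hg : Measurable g) (hf1 : ∀ k, ∫⁻ x, f k x ∂lam = 1)
    (hg1 : ∫⁻ x, g x ∂lam = 1) (hfg : ∀ x, Tendsto (fun k => f k x) atTop (𝓝 (g x)))
    (h2 : Tendsto (fun k => ∫⁻ x, ENNReal.ofReal (‖x‖ ^ 2) ∂(lam.withDensity (f k))) atTop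
      (𝓝 (∫⁻ x, ENNReal.ofReal (‖x‖ ^ 2) ∂(lam.withDensity g))))
    (hfin : ∫⁻ x, ENNReal.ofReal (‖x‖ ^ 2) ∂(lam.withDensity g) ≠ ⊤) {η : ℝ} (hη : 0 < η) :
    ∀ᶠ k in atTop,
      Near (fun x : E => ‖x‖) (lam.withDensity (f k)) (lam.withDensity g) η := by
  have hw : Measurable fun x : E => ENNReal.ofReal (‖x‖ ^ 2) := by fun_prop
  have hmin : ∀ k, Measurable fun x => min (f k x) (g x) := fun k => (hf k).min hg
  have hfd : ∀ k, lam.withDensity (f k) = lam.withDensity (fun x => min (f k x) (g x))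
      + lam.withDensity (fun x => f k x - min (f k x) (g x)) := by
    intro k
    rw [← withDensity_add_left (hmin k)]
    congr 1
    ext x
    simp [add_tsub_cancel_of_le (min_le_left (f k x) (g x))]
  have hgd : ∀ k, lam.withDensity g = lam.withDensity (fun x => min (f k x) (g x))
      + lam.withDensity (fun x => g x - min (f k x) (g x)) := by
    intro k
    rw [← withDensity_add_left (hmin k)]
    congr 1
    ext x
    simp [add_tsub_cancel_of_le (min_le_right (f k x) (g x))]
  have hM : Tendsto (fun k => ∫⁻ x, ENNReal.ofReal (‖x‖ ^ 2)
      ∂(lam.withDensity fun x => min (f k x) (g x))) atTop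
      (𝓝 (∫⁻ x, ENNReal.ofReal (‖x‖ ^ 2) ∂(lam.withDensity g))) := by
    simp_rw [lintegral_withDensity_eq_lintegral_mul _ (hmin _) hw,
      lintegral_withDensity_eq_lintegral_mul _ hg hw]
    rw [lintegral_withDensity_eq_lintegral_mul _ hg hw] at hfin
    refine tendsto_lintegral_of_dominated_convergence
      (fun x => g x * ENNReal.ofReal (‖x‖ ^ 2)) (fun k => (hmin k).mul hw)
      (fun k => ae_of_all _ fun x => ?_) hfin (ae_of_all _ fun x => ?_)
    · exact mul_le_mul_left (min_le_right _ _) _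
    · refine ENNReal.Tendsto.mul_const ?_ (Or.inr ENNReal.ofReal_ne_top)
      simpa using (hfg x).min (tendsto_const_nhds (x := g x))
  have hM' : ∀ k, ∫⁻ x, ENNReal.ofReal (‖x‖ ^ 2)
      ∂(lam.withDensity fun x => min (f k x) (g x)) ≠ ⊤ := by
    intro k
    refine ne_top_of_le_ne_top hfin (lintegral_mono' ?_ le_rfl)
    conv_rhs => rw [hgd k]
    exact Measure.le_add_right le_rfl
  have hA : Tendsto (fun k => ∫⁻ x, ENNReal.ofReal (‖x‖ ^ 2)
      ∂(lam.withDensity fun x => f k x - min (f k x) (g x))) atTop (𝓝 0) := by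
    have := ENNReal.Tendsto.sub h2 hM (Or.inl hfin)
    rw [tsub_self] at this
    refine this.congr fun k => ?_
    conv_lhs => rw [hfd k]
    rw [lintegral_add_measure, ENNReal.add_sub_cancel_left (hM' k)]
  have hB : Tendsto (fun k => ∫⁻ x, ENNReal.ofReal (‖x‖ ^ 2)
      ∂(lam.withDensity fun x => g x - min (f k x) (g x))) atTop (𝓝 0) := by
    have := ENNReal.Tendsto.sub (tendsto_const_nhds (x := ∫⁻ x, ENNReal.ofReal (‖x‖ ^ 2)
      ∂(lam.withDensity g)) (f := atTop (α := ℕ))) hM (Or.inl hfin)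
    rw [tsub_self] at this
    refine this.congr fun k => ?_
    conv_lhs => enter [1]; rw [hgd k]
    rw [lintegral_add_measure, ENNReal.add_sub_cancel_left (hM' k)]
  have hS := (ENNReal.Tendsto.const_mul (a := 2) hA (Or.inr (by simp))).add
    (ENNReal.Tendsto.const_mul (a := 2) hB (Or.inr (by simp)))
  rw [mul_zero, add_zero] at hS
  have hpos : 0 < ENNReal.ofReal (η ^ 2) := ENNReal.ofReal_pos.2 (by positivity)
  filter_upwards [hS.eventually_le_const hpos] with k hk
  have uf : lam.withDensity (f k) Set.univ = 1 := by simp [hf1 k]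
  have ug : lam.withDensity g Set.univ = 1 := by simp [hg1]
  rw [hfd k, Measure.add_apply] at uf
  rw [hgd k, Measure.add_apply] at ug
  have fin1 : IsFiniteMeasure (lam.withDensity fun x => min (f k x) (g x)) :=
    ⟨lt_of_le_of_lt (le_self_add.trans uf.le) ENNReal.one_lt_top⟩
  have fin2 : IsFiniteMeasure (lam.withDensity fun x => f k x - min (f k x) (g x)) :=
    ⟨lt_of_le_of_lt (le_add_self.trans uf.le) ENNReal.one_lt_top⟩
  have fin3 : IsFiniteMeasure (lam.withDensity fun x => g x - min (f k x) (g x)) :=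
    ⟨lt_of_le_of_lt (le_add_self.trans ug.le) ENNReal.one_lt_top⟩
  have hu := (ENNReal.add_right_inj (measure_ne_top _ _)).1 (uf.trans ug.symm)
  have := near_of_common_part (κ := lam.withDensity fun x => min (f k x) (g x)) hu hη.le hk
  rwa [← hfd k, ← hgd k] at this

end WeakConvergence

section Mollification

variable {E : Type*} [NormedAddCommGroup E] [InnerProductSpace ℝ E] [FiniteDimensional ℝ E]
  [MeasurableSpace E] [BorelSpace E]

lemma exists_mollifier {σ : ℝ} (hσ : 0 < σ) : ∃ φ : BoundedContinuousFunction E ℝ≥0,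
    ∫⁻ x, φ x ∂(Measure.addHaar : Measure E) = 1 ∧ (∀ x, φ (-x) = φ x) ∧
      ∀ x, φ x ≠ 0 → ‖x‖ ≤ σ := by
  let b : ContDiffBump (0 : E) := ⟨σ / 2, σ, by positivity, by linarith⟩
  let ψ : E → ℝ := b.normed Measure.addHaar
  obtain ⟨C, hC⟩ := b.hasCompactSupport_normed (μ := (Measure.addHaar : Measure E))
    |>.exists_bound_of_continuous
    b.continuous_normed
  let ψb : BoundedContinuousFunction E ℝ :=
    BoundedContinuousFunction.ofNormedAddCommGroup ψ b.continuous_normed C hC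
  have hval : ∀ x, ψb.nnrealPart x = (ψ x).toNNReal := fun x => rfl
  refine ⟨ψb.nnrealPart, ?_, fun x => ?_, fun x hx => ?_⟩
  · have h1 := b.integral_normed (μ := (Measure.addHaar : Measure E))
    have h2 := ofReal_integral_eq_lintegral_ofReal
      (b.integrable_normed (μ := (Measure.addHaar : Measure E))) (ae_of_all _ b.nonneg_normed)
    rw [h1, ENNReal.ofReal_one] at h2
    exact h2.symm
  · rw [hval, hval]
    exact congrArg _ (b.normed_neg x)
  · rw [hval] at hx
    have hx' : x ∈ Function.support ψ := by
      intro h0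
      simp [h0] at hx
    rw [b.support_normed_eq] at hx'
    simpa using (mem_ball_zero_iff.1 hx').le

/-- The law of the sum of independent vectors, one of which has density `φ`. -/
lemma map_add_prod_withDensity {lam : Measure E} [SFinite lam] [lam.IsAddLeftInvariant]
    {φ : E → ℝ≥0∞} (hφ : Measurable φ) (μ : Measure E) [SFinite μ] :
    (μ.prod (lam.withDensity φ)).map (fun p => p.1 + p.2)
      = lam.withDensity fun x => ∫⁻ s, φ (-s + x) ∂μ := by
  refine Measure.ext_of_lintegral _ fun f hf => ?_
  have hm : Measurable fun x => ∫⁻ s, φ (-s + x) ∂μ :=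
    Measurable.lintegral_prod_left' (f := fun p : E × E => φ (-p.1 + p.2)) (by fun_prop)
  rw [lintegral_map hf (by fun_prop), lintegral_prod _ (by fun_prop),
    lintegral_withDensity_eq_lintegral_mul _ hm hf]
  simp only [Pi.mul_apply]
  calc ∫⁻ s, ∫⁻ z, f (s + z) ∂lam.withDensity φ ∂μ
      = ∫⁻ s, ∫⁻ x, φ (-s + x) * f x ∂lam ∂μ := by
        refine lintegral_congr fun s => ?_
        rw [lintegral_withDensity_eq_lintegral_mul _ hφ (by fun_prop),
          ← lintegral_add_left_eq_self (μ := lam) (fun x => φ (-s + x) * f x) s]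
        simp
    _ = ∫⁻ x, ∫⁻ s, φ (-s + x) * f x ∂μ ∂lam := lintegral_lintegral_swap (by fun_prop)
    _ = _ := by
        refine lintegral_congr fun x => ?_
        rw [lintegral_mul_const _ (by fun_prop)]

/-- Weak convergence together with convergence of second moments implies convergence in the
Wasserstein distance. -/
theorem eventually_near_of_tendsto {μs : ℕ → ProbabilityMeasure E} {μ : ProbabilityMeasure E}
    (h : Tendsto μs atTop (𝓝 μ))
    (h2 : Tendsto (fun k => ∫⁻ x, ENNReal.ofReal (‖x‖ ^ 2) ∂(μs k : Measure E)) atTop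
      (𝓝 (∫⁻ x, ENNReal.ofReal (‖x‖ ^ 2) ∂(μ : Measure E))))
    (hfin : ∫⁻ x, ENNReal.ofReal (‖x‖ ^ 2) ∂(μ : Measure E) ≠ ⊤) {η : ℝ} (hη : 0 < η) :
    ∀ᶠ k in atTop, Near (fun x : E => ‖x‖) (μs k : Measure E) μ η := by
  have hσ : 0 < η / 3 := by positivity
  obtain ⟨φ, h1, hneg, hsupp⟩ := exists_mollifier (E := E) hσ
  set lam : Measure E := Measure.addHaar
  let φe : E → ℝ≥0∞ := fun x => φ x
  have hφe : Measurable φe := by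
    have := φ.continuous
    fun_prop
  set ζ : Measure E := lam.withDensity φe with hζ
  have hprob : IsProbabilityMeasure ζ := ⟨by simpa [hζ] using h1⟩
  have hae : ∀ᵐ z ∂ζ, ‖z‖ ≤ η / 3 := by
    rw [hζ, ae_withDensity_iff hφe]
    exact ae_of_all _ fun x hx => hsupp x fun h0 => hx (by simp [φe, h0])
  have hbd1 : Integrable (fun z => z) ζ :=
    Integrable.of_bound aestronglyMeasurable_id (η / 3) hae
  have hbd2 : Integrable (fun z => ‖z‖ ^ 2) ζ := by
    refine Integrable.of_bound (by fun_prop) ((η / 3) ^ 2) ?_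
    filter_upwards [hae] with z hz
    rw [Real.norm_of_nonneg (by positivity)]
    gcongr
  have hsymm : ζ.map (fun z => -z) = ζ := by
    refine Measure.ext_of_lintegral _ fun f hf => ?_
    rw [lintegral_map hf measurable_neg, hζ,
      lintegral_withDensity_eq_lintegral_mul _ hφe (by fun_prop),
      lintegral_withDensity_eq_lintegral_mul _ hφe hf]
    rw [← lintegral_neg_eq_self (μ := lam) (fun x => (φe * f) x)]
    refine lintegral_congr fun x => ?_
    simp [φe, hneg]
  have hmean : ∫ z, z ∂ζ = 0 := by
    have : ∫ z, z ∂ζ = -∫ z, z ∂ζ := by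
      conv_lhs => rw [← hsymm, integral_map (by fun_prop) (by fun_prop)]
      rw [integral_neg]
    have h2 : (2 : ℝ) • ∫ z, z ∂ζ = 0 := by
      rw [two_smul]
      nth_rewrite 1 [this]
      exact neg_add_cancel _
    exact (smul_eq_zero.1 h2).resolve_left two_ne_zero
  let S : Measure E → Measure E := fun ρ => (ρ.prod ζ).map fun p => p.1 + p.2
  let dens : Measure E → E → ℝ≥0∞ := fun ρ x => ∫⁻ s, φe (-s + x) ∂ρ
  have hdm : ∀ ρ : Measure E, [IsProbabilityMeasure ρ] → Measurable (dens ρ) := fun ρ _ =>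
    Measurable.lintegral_prod_left' (f := fun p : E × E => φe (-p.1 + p.2)) (by fun_prop)
  have hS : ∀ ρ : Measure E, [IsProbabilityMeasure ρ] → S ρ = lam.withDensity (dens ρ) :=
    fun ρ _ => map_add_prod_withDensity hφe ρ
  have hSp : ∀ ρ : Measure E, [IsProbabilityMeasure ρ] → IsProbabilityMeasure (S ρ) :=
    fun ρ _ => Measure.isProbabilityMeasure_map (by fun_prop)
  have hd1 : ∀ ρ : Measure E, [IsProbabilityMeasure ρ] → ∫⁻ x, dens ρ x ∂lam = 1 := by
    intro ρ _
    have h1 := (hSp ρ).measure_univ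
    rw [hS ρ] at h1
    simpa using h1
  have hmom : ∀ ρ : Measure E, [IsProbabilityMeasure ρ] →
      ∫⁻ x, ENNReal.ofReal (‖x‖ ^ 2) ∂(lam.withDensity (dens ρ))
        = ∫⁻ x, ENNReal.ofReal (‖x‖ ^ 2) ∂ρ + ENNReal.ofReal (∫ z, ‖z‖ ^ 2 ∂ζ) := by
    intro ρ _
    rw [← hS ρ, lintegral_map (by fun_prop) (by fun_prop)]
    have := lintegral_norm_sq_add hmean hbd1 hbd2 ρ 1
    simp only [one_smul, one_pow, one_mul] at this
    rw [this, lintegral_add_right _ measurable_const, lintegral_const, measure_univ, mul_one]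
  have hnear : ∀ ρ : Measure E, [IsProbabilityMeasure ρ] →
      Near (fun x : E => ‖x‖) ρ (S ρ) (η / 3) := by
    intro ρ _
    have h0 : (ρ.prod ζ).map Prod.fst = ρ := by simp
    have := Near.of_map (c := fun x : E => ‖x‖) IsNormLike.of_norm (P := ρ.prod ζ)
      (X := Prod.fst) (Y := fun p => p.1 + p.2) (r := η / 3) measurable_fst (by fun_prop) ?_
    · rwa [h0] at this
    · rw [LpBound]
      have hae' : ∀ᵐ p ∂(ρ.prod ζ), ‖(‖p.1 - (p.1 + p.2)‖ : ℝ)‖ ≤ η / 3 := by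
        have h0' : (ρ.prod ζ).map Prod.snd = ζ := by simp
        have := hae
        rw [← h0'] at this
        filter_upwards [ae_of_ae_map (by fun_prop) this] with p hp
        simpa using hp
      refine (eLpNorm_le_of_ae_bound hae').trans (by simp)
  have key := eventually_near_withDensity (lam := lam) (f := fun k => dens (μs k))
    (g := dens μ) (fun k => hdm _) (hdm _) (fun k => hd1 _) (hd1 _) ?_ ?_ ?_ hσ
  · filter_upwards [key] with k hk
    rw [← hS, ← hS] at hk
    have := hSp (μs k)
    have := hSp μ
    have hfin := (((hnear (μs k)).trans IsNormLike.of_norm hk hσ.le hσ.le).trans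
      IsNormLike.of_norm ((hnear μ).symm IsNormLike.of_norm) (by positivity) hσ.le)
    exact hfin.mono_bound (by linarith)
  · intro x
    let ψ : BoundedContinuousFunction E ℝ≥0 := φ.compContinuous ⟨fun s => -s + x, by fun_prop⟩
    exact ProbabilityMeasure.tendsto_iff_forall_lintegral_tendsto.1 h ψ
  · simp_rw [hmom]
    exact h2.add tendsto_const_nhds
  · rw [hmom]
    exact ENNReal.add_ne_top.2 ⟨hfin, ENNReal.ofReal_ne_top⟩

end Mollification

/-- A centred probability law with finite fourth moment. -/
structure IsNoise {E : Type*} [NormedAddCommGroup E] [NormedSpace ℝ E] [MeasurableSpace E]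
    (ν : Measure E) : Prop where
  isProbabilityMeasure : IsProbabilityMeasure ν
  integrable : Integrable (fun x => x) ν
  integral_eq_zero : ∫ x, x ∂ν = 0
  integrable_norm_pow_four : Integrable (fun x => ‖x‖ ^ 4) ν

/-- The law of `a • (w₁ + ⋯ + wₖ)` for independent `wᵢ` of law `ν`. -/
def sumLaw {E : Type*} [NormedAddCommGroup E] [NormedSpace ℝ E] [MeasurableSpace E]
    (ν : Measure E) (a : ℝ) : ℕ → Measure E
  | 0 => Measure.dirac 0
  | k + 1 => ((sumLaw ν a k).prod ν).map fun p => p.1 + a • p.2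

section SumLaw

variable {E : Type*} [NormedAddCommGroup E] [InnerProductSpace ℝ E] [FiniteDimensional ℝ E]
  [MeasurableSpace E] [BorelSpace E] {ν : Measure E}

lemma IsNoise.integrable_norm_pow (h : IsNoise ν) {k : ℕ} (hk : k ≤ 4) :
    Integrable (fun x => ‖x‖ ^ k) ν := by
  have := h.isProbabilityMeasure
  refine ((integrable_const (1 : ℝ)).add h.integrable_norm_pow_four).mono' (by fun_prop)
    (ae_of_all _ fun x => ?_)
  rw [Real.norm_of_nonneg (by positivity), Pi.add_apply]
  rcases le_total ‖x‖ 1 with hx | hx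
  · have := pow_le_one₀ (n := k) (norm_nonneg x) hx
    have : 0 ≤ ‖x‖ ^ 4 := by positivity
    linarith
  · have := pow_le_pow_right₀ hx hk
    linarith

lemma IsNoise.integrable_inner_sq (h : IsNoise ν) (t : E) :
    Integrable (fun x => (inner ℝ t x) ^ 2) ν := by
  refine ((h.integrable_norm_pow (k := 2) (by norm_num)).const_mul (‖t‖ ^ 2)).mono' (by fun_prop)
    (ae_of_all _ fun x => ?_)
  rw [Real.norm_of_nonneg (by positivity), ← mul_pow, ← sq_abs]
  gcongr
  exact abs_real_inner_le_norm t x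

instance isProbabilityMeasure_sumLaw [IsProbabilityMeasure ν] (a : ℝ) (k : ℕ) :
    IsProbabilityMeasure (sumLaw ν a k) := by
  induction k with
  | zero => rw [sumLaw]; infer_instance
  | succ k ih => exact Measure.isProbabilityMeasure_map (by fun_prop)

lemma charFun_sumLaw [IsProbabilityMeasure ν] (a : ℝ) (k : ℕ) (t : E) :
    charFun (sumLaw ν a k) t = charFun ν (a • t) ^ k := by
  induction k with
  | zero => simp [sumLaw, charFun_dirac]
  | succ k ih =>
    have hp : IsProbabilityMeasure (ν.map fun x => a • x) :=
      Measure.isProbabilityMeasure_map (by fun_prop)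
    have h : sumLaw ν a (k + 1)
        = ((sumLaw ν a k).prod (ν.map fun x => a • x)).map fun p => p.1 + p.2 := by
      have h1 : (sumLaw ν a k).prod (ν.map fun x => a • x)
          = ((sumLaw ν a k).prod ν).map (Prod.map id fun x => a • x) := by
        rw [← Measure.map_prod_map _ _ measurable_id (by fun_prop), Measure.map_id]
      rw [h1, Measure.map_map (by fun_prop) (by fun_prop)]
      rfl
    rw [h, charFun_map_add_prod_eq_mul, Pi.mul_apply, ih, pow_succ]
    congr 1
    exact charFun_map_smul a t

lemma lintegral_norm_sq_sumLaw (h : IsNoise ν) (a : ℝ) (k : ℕ) :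
    ∫⁻ x, ENNReal.ofReal (‖x‖ ^ 2) ∂(sumLaw ν a k)
      = ENNReal.ofReal (k * (a ^ 2 * ∫ x, ‖x‖ ^ 2 ∂ν)) := by
  have := h.isProbabilityMeasure
  induction k with
  | zero => simp [sumLaw]
  | succ k ih =>
    have h2 : 0 ≤ a ^ 2 * ∫ x, ‖x‖ ^ 2 ∂ν :=
      mul_nonneg (sq_nonneg _) (integral_nonneg fun _ => sq_nonneg _)
    rw [sumLaw, lintegral_map (by fun_prop) (by fun_prop), lintegral_norm_sq_add
      h.integral_eq_zero h.integrable (h.integrable_norm_pow (by norm_num)),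
      lintegral_add_right _ measurable_const, ih, lintegral_const, measure_univ, mul_one,
      ← ENNReal.ofReal_add (by positivity) h2]
    congr 1
    push_cast
    ring

lemma norm_exp_mul_I_sub_taylor_le (x : ℝ) :
    ‖Complex.exp (x * Complex.I) - (1 + x * Complex.I - x ^ 2 / 2)‖ ≤ 4 * |x| ^ 3 := by
  have hn : ‖(x * Complex.I : ℂ)‖ = |x| := by simp
  rcases le_total |x| 1 with hx | hx
  · have h := Complex.norm_exp_sub_sum_le_norm_mul_exp (x * Complex.I) 3
    rw [hn] at h
    have he : Real.exp |x| ≤ 4 := by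
      have := Real.exp_le_exp.2 hx
      have := Real.exp_one_lt_d9
      linarith
    have hs : ∑ m ∈ Finset.range 3, (x * Complex.I : ℂ) ^ m / (m.factorial : ℂ)
        = 1 + x * Complex.I - x ^ 2 / 2 := by
      simp [Finset.sum_range_succ, mul_pow]
      ring
    rw [hs] at h
    calc _ ≤ |x| ^ 3 * Real.exp |x| := h
      _ ≤ |x| ^ 3 * 4 := by gcongr
      _ = _ := by ring
  · have h1 : ‖Complex.exp (x * Complex.I)‖ = 1 := Complex.norm_exp_ofReal_mul_I x
    have h2 : ‖(1 + x * Complex.I - x ^ 2 / 2 : ℂ)‖ ≤ 1 + |x| + |x| ^ 2 / 2 := by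
      refine (norm_sub_le _ _).trans ?_
      refine add_le_add ((norm_add_le _ _).trans ?_) ?_
      · rw [hn]; simp
      · simp
    have h3 : |x| ≤ |x| ^ 3 := le_self_pow₀ hx (by norm_num)
    have h4 : |x| ^ 2 ≤ |x| ^ 3 := pow_le_pow_right₀ hx (by norm_num)
    calc _ ≤ 1 + (1 + |x| + |x| ^ 2 / 2) := (norm_sub_le _ _).trans (by rw [h1]; linarith)
      _ ≤ _ := by linarith

/-- Second order expansion of the characteristic function of a noise law. -/
lemma IsNoise.norm_charFun_sub_le (h : IsNoise ν) (t : E) :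
    ‖charFun ν t - ((1 - (∫ x, (inner ℝ t x) ^ 2 ∂ν) / 2 : ℝ) : ℂ)‖
      ≤ 4 * ‖t‖ ^ 3 * ∫ x, ‖x‖ ^ 3 ∂ν := by
  have := h.isProbabilityMeasure
  have hi1 : Integrable (fun x => inner ℝ t x) ν := h.integrable.const_inner t
  have hi2 := h.integrable_inner_sq t
  have hc1 : Integrable (fun x => ((inner ℝ t x : ℝ) : ℂ) * Complex.I) ν :=
    (hi1.ofReal).mul_const _
  have hc2 : Integrable (fun x => ((inner ℝ t x : ℝ) : ℂ) ^ 2 / 2) ν := by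
    have := (hi2.ofReal (𝕜 := ℂ)).div_const 2
    simpa using this
  have he : Integrable (fun x => Complex.exp ((inner ℝ t x : ℝ) * Complex.I)) ν := by
    refine Integrable.of_bound (by fun_prop) 1 (ae_of_all _ fun x => ?_)
    rw [Complex.norm_exp_ofReal_mul_I]
  have hc0 : Integrable (fun _ : E => (1 : ℂ)) ν := integrable_const _
  have hc01 : Integrable (fun x => 1 + ((inner ℝ t x : ℝ) : ℂ) * Complex.I) ν := hc0.add hc1
  have hq : Integrable (fun x => 1 + ((inner ℝ t x : ℝ) : ℂ) * Complex.I
      - ((inner ℝ t x : ℝ) : ℂ) ^ 2 / 2) ν := hc01.sub hc2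
  have hval : ∫ x, (1 + ((inner ℝ t x : ℝ) : ℂ) * Complex.I
      - ((inner ℝ t x : ℝ) : ℂ) ^ 2 / 2) ∂ν = ((1 - (∫ x, (inner ℝ t x) ^ 2 ∂ν) / 2 : ℝ) : ℂ) := by
    rw [integral_sub hc01 hc2, integral_add hc0 hc1, integral_mul_const, integral_div]
    have e1 : ∫ x, ((inner ℝ t x : ℝ) : ℂ) ∂ν = 0 := by
      rw [integral_complex_ofReal, integral_inner h.integrable, h.integral_eq_zero]
      simp
    have e2 : ∫ x, ((inner ℝ t x : ℝ) : ℂ) ^ 2 ∂ν = ((∫ x, (inner ℝ t x) ^ 2 ∂ν : ℝ) : ℂ) := by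
      rw [← integral_complex_ofReal]
      simp
    rw [e1, e2]
    simp
  have hcf : charFun ν t = ∫ x, Complex.exp ((inner ℝ t x : ℝ) * Complex.I) ∂ν := by
    rw [charFun_apply]
    simp_rw [real_inner_comm]
  rw [← hval, hcf, ← integral_sub he hq, ← integral_const_mul]
  refine norm_integral_le_of_norm_le ((h.integrable_norm_pow (k := 3) (by norm_num)).const_mul _)
    (ae_of_all _ fun x => (norm_exp_mul_I_sub_taylor_le _).trans ?_)
  rw [mul_assoc, ← mul_pow]
  gcongr
  exact abs_real_inner_le_norm t x

lemma norm_pow_sub_pow_le {z w : ℂ} (hz : ‖z‖ ≤ 1) (hw : ‖w‖ ≤ 1) (n : ℕ) :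
    ‖z ^ n - w ^ n‖ ≤ n * ‖z - w‖ := by
  induction n with
  | zero => simp
  | succ n ih =>
    have : z ^ (n + 1) - w ^ (n + 1) = z * (z ^ n - w ^ n) + (z - w) * w ^ n := by ring
    rw [this]
    refine (norm_add_le _ _).trans ?_
    rw [norm_mul, norm_mul, norm_pow]
    have h1 : ‖z‖ * ‖z ^ n - w ^ n‖ ≤ 1 * (n * ‖z - w‖) :=
      mul_le_mul hz ih (norm_nonneg _) zero_le_one
    have h2 : ‖z - w‖ * ‖w‖ ^ n ≤ ‖z - w‖ * 1 :=
      mul_le_mul_of_nonneg_left (pow_le_one₀ (norm_nonneg _) hw) (norm_nonneg _)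
    push_cast
    linarith

lemma tendsto_natFloor_div_mul {τ : ℝ} (hτ : 0 ≤ τ) :
    Tendsto (fun α : ℝ => (⌊τ / α⌋₊ : ℝ) * α) (𝓝[>] 0) (𝓝 τ) := by
  have hid : Tendsto (fun α : ℝ => α) (𝓝[>] 0) (𝓝 0) := nhdsWithin_le_nhds
  have hl : Tendsto (fun α : ℝ => τ - α) (𝓝[>] 0) (𝓝 τ) := by
    simpa using (tendsto_const_nhds (x := τ)).sub hid
  refine tendsto_of_tendsto_of_tendsto_of_le_of_le' hl tendsto_const_nhds ?_ ?_
  · filter_upwards [self_mem_nhdsWithin] with α (hα : 0 < α)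
    have := Nat.lt_floor_add_one (τ / α)
    rw [div_lt_iff₀ hα] at this
    linarith
  · filter_upwards [self_mem_nhdsWithin] with α (hα : 0 < α)
    have := Nat.floor_le (a := τ / α) (by positivity)
    rwa [le_div_iff₀ hα] at this

/-- Pointwise convergence of the characteristic functions of the rescaled sums. -/
lemma IsNoise.tendsto_charFun_sumLaw (h : IsNoise ν) {τ : ℝ} (hτ : 0 ≤ τ) (t : E) :
    Tendsto (fun α : ℝ => charFun (sumLaw ν √α ⌊τ / α⌋₊) t) (𝓝[>] 0)
      (𝓝 (Complex.exp ((-(τ * ∫ x, (inner ℝ t x) ^ 2 ∂ν) / 2 : ℝ) : ℂ))) := by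
  have := h.isProbabilityMeasure
  set q := ∫ x, (inner ℝ t x) ^ 2 ∂ν with hq
  have hq0 : 0 ≤ q := integral_nonneg fun _ => sq_nonneg _
  set C := 4 * ‖t‖ ^ 3 * ∫ x, ‖x‖ ^ 3 ∂ν with hC
  have hid : Tendsto (fun α : ℝ => α) (𝓝[>] 0) (𝓝 0) := nhdsWithin_le_nhds
  have hsq : Tendsto (fun α : ℝ => √α) (𝓝[>] 0) (𝓝 0) := by
    have := (Real.continuous_sqrt.tendsto 0).comp hid
    rwa [Real.sqrt_zero] at this
  have hfl := tendsto_natFloor_div_mul hτ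
  have hmain : Tendsto (fun α : ℝ => Complex.exp ((-(α * q) / 2 : ℝ) : ℂ) ^ ⌊τ / α⌋₊) (𝓝[>] 0)
      (𝓝 (Complex.exp ((-(τ * q) / 2 : ℝ) : ℂ))) := by
    have h1 : Tendsto (fun α : ℝ => Complex.exp ((-((⌊τ / α⌋₊ : ℝ) * α * q) / 2 : ℝ) : ℂ)) (𝓝[>] 0)
        (𝓝 (Complex.exp ((-(τ * q) / 2 : ℝ) : ℂ))) := by
      refine (Complex.continuous_exp.tendsto _).comp
        ((Complex.continuous_ofReal.tendsto _).comp ?_)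
      exact ((hfl.mul_const q).neg).div_const 2
    refine h1.congr fun α => ?_
    rw [← Complex.exp_nat_mul]
    congr 1
    push_cast
    ring
  have hdiff : Tendsto (fun α : ℝ => charFun (sumLaw ν √α ⌊τ / α⌋₊) t
      - Complex.exp ((-(α * q) / 2 : ℝ) : ℂ) ^ ⌊τ / α⌋₊) (𝓝[>] 0) (𝓝 0) := by
    have hb : Tendsto (fun α : ℝ => ((⌊τ / α⌋₊ : ℝ) * α) * (C * √α + q ^ 2 / 4 * α)) (𝓝[>] 0)
        (𝓝 0) := by
      have := hfl.mul ((hsq.const_mul C).add (hid.const_mul (q ^ 2 / 4)))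
      simpa using this
    have hsmall : ∀ᶠ α : ℝ in 𝓝[>] 0, α * q / 2 ≤ 1 := by
      have : Tendsto (fun α : ℝ => α * q / 2) (𝓝[>] 0) (𝓝 0) := by
        simpa using (hid.mul_const q).div_const 2
      exact this.eventually_le_const zero_lt_one
    refine squeeze_zero_norm' ?_ hb
    filter_upwards [self_mem_nhdsWithin, hsmall] with α (hα : 0 < α) hα1
    rw [charFun_sumLaw]
    have hw : ‖Complex.exp ((-(α * q) / 2 : ℝ) : ℂ)‖ ≤ 1 := by
      rw [Complex.norm_exp, Complex.ofReal_re]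
      exact Real.exp_le_one_iff.2 (by nlinarith [mul_nonneg hα.le hq0])
    refine (norm_pow_sub_pow_le (norm_charFun_le_one _) hw _).trans ?_
    have h1 := h.norm_charFun_sub_le (√α • t)
    have hqa : ∫ x, (inner ℝ (√α • t) x) ^ 2 ∂ν = α * q := by
      rw [hq, ← integral_const_mul]
      congr 1
      ext x
      rw [real_inner_smul_left, mul_pow, Real.sq_sqrt hα.le]
    have hna : ‖√α • t‖ ^ 3 = α * √α * ‖t‖ ^ 3 := by
      rw [norm_smul, mul_pow, Real.norm_of_nonneg (Real.sqrt_nonneg _), pow_succ,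
        Real.sq_sqrt hα.le]
    rw [hqa, hna] at h1
    have h2 : ‖((1 - α * q / 2 : ℝ) : ℂ) - Complex.exp ((-(α * q) / 2 : ℝ) : ℂ)‖
        ≤ (α * q / 2) ^ 2 := by
      rw [← Complex.ofReal_exp, ← Complex.ofReal_sub, Complex.norm_real, norm_sub_rev]
      have h0 := Real.abs_exp_sub_one_sub_id_le (x := -(α * q) / 2) (by
        rw [neg_div, abs_neg, abs_of_nonneg (by positivity)]; exact hα1)
      have e1 : Real.exp (-(α * q) / 2) - (1 - α * q / 2)
          = Real.exp (-(α * q) / 2) - 1 - -(α * q) / 2 := by ring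
      have e2 : (-(α * q) / 2) ^ 2 = (α * q / 2) ^ 2 := by ring
      rw [Real.norm_eq_abs, e1, ← e2]
      exact h0
    have h3 := (norm_sub_le_norm_sub_add_norm_sub (charFun ν (√α • t)) ((1 - α * q / 2 : ℝ) : ℂ)
      (Complex.exp ((-(α * q) / 2 : ℝ) : ℂ))).trans (add_le_add h1 h2)
    calc _ ≤ (⌊τ / α⌋₊ : ℝ) * (4 * (α * √α * ‖t‖ ^ 3) * ∫ x, ‖x‖ ^ 3 ∂ν + (α * q / 2) ^ 2) := by
          gcongr
      _ = _ := by rw [hC]; ring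
  have := hdiff.add hmain
  simpa using this

end SumLaw

section CentralLimit

variable {d : ℕ} {ν ν' : Measure (EuclideanSpace ℝ (Fin d))}

/-- The centred Gaussian law with covariance `τ Var(w)`, `w` of law `ν`. -/
def gaussianLimit (ν : Measure (EuclideanSpace ℝ (Fin d))) (τ : ℝ) :
    Measure (EuclideanSpace ℝ (Fin d)) :=
  multivariateGaussian 0 (Matrix.of fun i j => τ * ∫ x, x i * x j ∂ν)

instance (τ : ℝ) : IsProbabilityMeasure (gaussianLimit ν τ) := by
  rw [gaussianLimit]
  infer_instance

lemma IsNoise.integrable_coord_mul (h : IsNoise ν) (i j : Fin d) :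
    Integrable (fun x : EuclideanSpace ℝ (Fin d) => x i * x j) ν := by
  refine (h.integrable_norm_pow (k := 2) (by norm_num)).mono' (by fun_prop)
    (ae_of_all _ fun x => ?_)
  rw [norm_mul, sq]
  exact mul_le_mul (PiLp.norm_apply_le x i) (PiLp.norm_apply_le x j) (norm_nonneg _)
    (norm_nonneg _)

lemma IsNoise.dotProduct_covariance (h : IsNoise ν) (τ : ℝ) (t : EuclideanSpace ℝ (Fin d)) :
    dotProduct t.ofLp (Matrix.mulVec (Matrix.of fun i j => τ * ∫ x, x i * x j ∂ν) t.ofLp)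
      = τ * ∫ x, (inner ℝ t x) ^ 2 ∂ν := by
  have hx : ∀ x : EuclideanSpace ℝ (Fin d),
      (inner ℝ t x) ^ 2 = ∑ i, ∑ j, (t i * t j) * (x i * x j) := by
    intro x
    simp only [PiLp.inner_apply, RCLike.inner_apply, conj_trivial, sq, Finset.sum_mul_sum]
    refine Finset.sum_congr rfl fun i _ => Finset.sum_congr rfl fun j _ => ?_
    ring
  simp_rw [hx]
  rw [integral_finsetSum _ fun i _ => integrable_finsetSum _ fun j _ =>
    (h.integrable_coord_mul i j).const_mul _]
  simp only [dotProduct, Matrix.mulVec, Matrix.of_apply, Finset.mul_sum]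
  refine Finset.sum_congr rfl fun i _ => ?_
  rw [integral_finsetSum _ fun j _ => (h.integrable_coord_mul i j).const_mul _, Finset.mul_sum]
  refine Finset.sum_congr rfl fun j _ => ?_
  rw [integral_const_mul]
  ring

lemma IsNoise.posSemidef_covariance (h : IsNoise ν) {τ : ℝ} (hτ : 0 ≤ τ) :
    (Matrix.of fun i j => τ * ∫ x : EuclideanSpace ℝ (Fin d), x i * x j ∂ν).PosSemidef := by
  refine Matrix.PosSemidef.of_dotProduct_mulVec_nonneg ?_ fun x => ?_
  · ext i j
    simp [mul_comm]
  · have := h.dotProduct_covariance τ (WithLp.toLp 2 x)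
    simp only at this
    rw [star_trivial, this]
    exact mul_nonneg hτ (integral_nonneg fun _ => sq_nonneg _)

lemma IsNoise.charFun_gaussianLimit (h : IsNoise ν) {τ : ℝ} (hτ : 0 ≤ τ)
    (t : EuclideanSpace ℝ (Fin d)) : charFun (gaussianLimit ν τ) t
      = Complex.exp ((-(τ * ∫ x, (inner ℝ t x) ^ 2 ∂ν) / 2 : ℝ) : ℂ) := by
  rw [gaussianLimit, charFun_multivariateGaussian (h.posSemidef_covariance hτ),
    h.dotProduct_covariance]
  congr 1
  push_cast
  simp
  ring

lemma IsNoise.gaussianLimit_congr (h : IsNoise ν) (h' : IsNoise ν')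
    (hcov : ∀ z, ∫ x, (inner ℝ z x) ^ 2 ∂ν' = ∫ x, (inner ℝ z x) ^ 2 ∂ν) {τ : ℝ} (hτ : 0 ≤ τ) :
    gaussianLimit ν' τ = gaussianLimit ν τ := by
  refine Measure.ext_of_charFun ?_
  ext t
  rw [h.charFun_gaussianLimit hτ, h'.charFun_gaussianLimit hτ, hcov]

lemma IsNoise.lintegral_norm_sq_gaussianLimit (h : IsNoise ν) {τ : ℝ} (hτ : 0 ≤ τ) :
    ∫⁻ x, ENNReal.ofReal (‖x‖ ^ 2) ∂(gaussianLimit ν τ)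
      = ENNReal.ofReal (τ * ∫ x, ‖x‖ ^ 2 ∂ν) := by
  have hS := h.posSemidef_covariance hτ
  have hmem : MemLp id 2 (gaussianLimit ν τ) :=
    IsGaussian.memLp_two_id
      (μ := multivariateGaussian 0 (Matrix.of fun i j => τ * ∫ x, x i * x j ∂ν))
  have hint : Integrable (fun x => ‖x‖ ^ 2) (gaussianLimit ν τ) :=
    hmem.integrable_norm_pow (by norm_num)
  have hmi : ∀ i, MemLp (fun x : EuclideanSpace ℝ (Fin d) => x i) 2 (gaussianLimit ν τ) := by
    intro i
    exact hmem.of_le (by fun_prop) (ae_of_all _ fun x => PiLp.norm_apply_le x i)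
  have hvar : ∀ i, ∫ x, x i ^ 2 ∂(gaussianLimit ν τ) = τ * ∫ x, x i * x i ∂ν := by
    intro i
    have h0 : ∫ x, x i ∂(gaussianLimit ν τ) = 0 := by
      have h1 := (EuclideanSpace.proj i : EuclideanSpace ℝ (Fin d) →L[ℝ] ℝ).integral_comp_id_comm
        (μ := gaussianLimit ν τ) (hmem.integrable (by norm_num))
      have h2 : ∫ x, x ∂(gaussianLimit ν τ) = 0 := integral_id_multivariateGaussian
      rw [h2] at h1
      simpa using h1
    have h1 := variance_eval_multivariateGaussian (μ := 0) hS i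
    change Var[fun x => x i; gaussianLimit ν τ] = _ at h1
    rw [variance_of_integral_eq_zero (by fun_prop) h0] at h1
    simpa using h1
  rw [← ofReal_integral_eq_lintegral_ofReal hint (ae_of_all _ fun _ => by positivity)]
  congr 1
  simp_rw [EuclideanSpace.real_norm_sq_eq]
  rw [integral_finsetSum _ fun i _ => (hmi i).integrable_sq,
    integral_finsetSum _ fun i _ => by simpa [sq] using h.integrable_coord_mul i i, Finset.mul_sum]
  refine Finset.sum_congr rfl fun i _ => ?_
  rw [hvar]
  simp_rw [sq]

/-- Central limit theorem in the Wasserstein distance. -/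
theorem IsNoise.eventually_near_gaussianLimit (h : IsNoise ν) {τ : ℝ} (hτ : 0 ≤ τ) {η : ℝ}
    (hη : 0 < η) : ∀ᶠ α : ℝ in 𝓝[>] 0,
      Near (fun x => ‖x‖) (sumLaw ν √α ⌊τ / α⌋₊) (gaussianLimit ν τ) η := by
  have := h.isProbabilityMeasure
  by_contra hcon
  obtain ⟨u, hu, hu'⟩ := exists_seq_forall_of_frequently (not_eventually.1 hcon)
  let μs : ℕ → ProbabilityMeasure (EuclideanSpace ℝ (Fin d)) :=
    fun k => ⟨sumLaw ν √(u k) ⌊τ / u k⌋₊, inferInstance⟩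
  let μ₀ : ProbabilityMeasure (EuclideanSpace ℝ (Fin d)) := ⟨gaussianLimit ν τ, inferInstance⟩
  have hw : Tendsto μs atTop (𝓝 μ₀) := by
    refine ProbabilityMeasure.tendsto_of_tendsto_charFun fun t => ?_
    change Tendsto (fun k => charFun (sumLaw ν √(u k) ⌊τ / u k⌋₊) t) atTop
      (𝓝 (charFun (gaussianLimit ν τ) t))
    rw [h.charFun_gaussianLimit hτ]
    exact (h.tendsto_charFun_sumLaw hτ t).comp hu
  have h2 : Tendsto
      (fun k => ∫⁻ x, ENNReal.ofReal (‖x‖ ^ 2) ∂(μs k : Measure (EuclideanSpace ℝ (Fin d)))) atTop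
      (𝓝 (∫⁻ x, ENNReal.ofReal (‖x‖ ^ 2) ∂(μ₀ : Measure (EuclideanSpace ℝ (Fin d))))) := by
    change Tendsto (fun k => ∫⁻ x, ENNReal.ofReal (‖x‖ ^ 2) ∂(sumLaw ν √(u k) ⌊τ / u k⌋₊)) atTop
      (𝓝 (∫⁻ x, ENNReal.ofReal (‖x‖ ^ 2) ∂(gaussianLimit ν τ)))
    rw [h.lintegral_norm_sq_gaussianLimit hτ]
    simp_rw [lintegral_norm_sq_sumLaw h]
    have h3 : Tendsto (fun α : ℝ => ENNReal.ofReal (((⌊τ / α⌋₊ : ℝ) * α) * ∫ x, ‖x‖ ^ 2 ∂ν))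
        (𝓝[>] 0) (𝓝 (ENNReal.ofReal (τ * ∫ x, ‖x‖ ^ 2 ∂ν))) :=
      (ENNReal.continuous_ofReal.tendsto _).comp ((tendsto_natFloor_div_mul hτ).mul_const _)
    refine (h3.comp hu).congr' ?_
    filter_upwards [hu.eventually self_mem_nhdsWithin] with k (hk : 0 < u k)
    simp only [Function.comp_apply]
    rw [Real.sq_sqrt hk.le, mul_assoc]
  have hfin : ∫⁻ x, ENNReal.ofReal (‖x‖ ^ 2) ∂(μ₀ : Measure (EuclideanSpace ℝ (Fin d))) ≠ ⊤ := by
    change ∫⁻ x, ENNReal.ofReal (‖x‖ ^ 2) ∂(gaussianLimit ν τ) ≠ ⊤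
    rw [h.lintegral_norm_sq_gaussianLimit hτ]
    exact ENNReal.ofReal_ne_top
  obtain ⟨k, hk⟩ := (eventually_near_of_tendsto hw h2 hfin hη).exists
  exact hu' k hk

end CentralLimit

/-- The law at time `k` of the Markov chain `sₖ₊₁ = f (sₖ, wₖ)` with independent `wₖ` of law `ν`. -/
def chainLaw {S E : Type*} [MeasurableSpace S] [MeasurableSpace E] (f : S × E → S)
    (ν : Measure E) (P₀ : Measure S) : ℕ → Measure S
  | 0 => P₀
  | k + 1 => ((chainLaw f ν P₀ k).prod ν).map f

section ChainLaw

variable {S S' E : Type*} [MeasurableSpace S] [MeasurableSpace S'] [MeasurableSpace E]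
  {f : S × E → S} {f' : S' × E → S'} {ν : Measure E} {P₀ : Measure S} {P₀' : Measure S'}

lemma isProbabilityMeasure_chainLaw [IsProbabilityMeasure ν] [IsProbabilityMeasure P₀]
    (hf : Measurable f) (k : ℕ) : IsProbabilityMeasure (chainLaw f ν P₀ k) := by
  induction k with
  | zero => rw [chainLaw]; infer_instance
  | succ k ih => exact Measure.isProbabilityMeasure_map hf.aemeasurable

lemma map_chainLaw [IsProbabilityMeasure ν] [IsProbabilityMeasure P₀] (hf : Measurable f)
    (hf' : Measurable f') {φ : S → S'} (hφ : Measurable φ) (h0 : P₀.map φ = P₀')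
    (h : ∀ s w, φ (f (s, w)) = f' (φ s, w)) (k : ℕ) :
    (chainLaw f ν P₀ k).map φ = chainLaw f' ν P₀' k := by
  induction k with
  | zero => exact h0
  | succ k ih =>
    have := isProbabilityMeasure_chainLaw (ν := ν) (P₀ := P₀) hf k
    rw [chainLaw, chainLaw, ← ih, Measure.map_map hφ hf]
    have h1 : ((chainLaw f ν P₀ k).map φ).prod ν
        = ((chainLaw f ν P₀ k).prod ν).map (Prod.map φ id) := by
      rw [← Measure.map_prod_map _ _ hφ measurable_id, Measure.map_id]
    rw [h1, Measure.map_map hf' (hφ.prodMap measurable_id)]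
    congr 1
    ext p
    exact h p.1 p.2

lemma chainLaw_eq_of_stationary (h : (P₀.prod ν).map f = P₀) (k : ℕ) :
    chainLaw f ν P₀ k = P₀ := by
  induction k with
  | zero => rfl
  | succ k ih => rw [chainLaw, ih, h]

lemma LpBound.prod_fst {V : Type*} [MeasurableSpace V] [IsProbabilityMeasure ν] {P : Measure S}
    {p : ℝ≥0∞} {c : V → ℝ} {X : S → V} {r : ℝ} (hX : Measurable X) (hcm : Measurable c)
    [SFinite P] (h : LpBound p c P X r) : LpBound p c (P.prod ν) (fun q => X q.1) r :=
  LpBound.of_map_eq measurable_fst hX hcm (by simp) h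

end ChainLaw

section Moments

variable {E : Type*} [NormedAddCommGroup E] [InnerProductSpace ℝ E] [FiniteDimensional ℝ E]
  [MeasurableSpace E] [BorelSpace E] {ν : Measure E} {c : E → ℝ} {γ : ℝ}

lemma IsNormLike.continuous_of_lipschitz (hc : IsNormLike c) {U : E → E}
    (hU : ∀ x y, c (U x - U y) ≤ γ * c (x - y)) (hγ : 0 ≤ γ) : Continuous U := by
  obtain ⟨K, hK, h1⟩ := hc.exists_le_norm
  obtain ⟨K', hK', h2⟩ := hc.exists_norm_le
  refine (LipschitzWith.of_dist_le_mul (K := ⟨K' * (γ * K), by positivity⟩)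
    fun x y => ?_).continuous
  rw [dist_eq_norm, dist_eq_norm]
  calc ‖U x - U y‖ ≤ K' * (γ * (K * ‖x - y‖)) := by
        refine (h2 _).trans ?_
        gcongr
        refine (hU x y).trans ?_
        gcongr
        exact h1 _
    _ = K' * (γ * K) * ‖x - y‖ := by ring

lemma norm_add_pow_four_le (a b : E) : ‖a + b‖ ^ 4
    ≤ ‖a‖ ^ 4 + 4 * ‖a‖ ^ 2 * inner ℝ a b + 8 * ‖a‖ ^ 2 * ‖b‖ ^ 2 + 3 * ‖b‖ ^ 4 := by
  have h1 : ‖a + b‖ ^ 4 = (‖a‖ ^ 2 + 2 * inner ℝ a b + ‖b‖ ^ 2) ^ 2 := by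
    rw [← norm_add_sq_real]; ring
  have h2 := abs_le.1 (abs_real_inner_le_norm a b)
  have h3 : (inner ℝ a b) ^ 2 ≤ (‖a‖ * ‖b‖) ^ 2 := sq_le_sq' h2.1 h2.2
  have h4 : inner ℝ a b * ‖b‖ ^ 2 ≤ ‖a‖ * ‖b‖ * ‖b‖ ^ 2 :=
    mul_le_mul_of_nonneg_right h2.2 (by positivity)
  rw [h1]
  nlinarith [sq_nonneg (‖a‖ * ‖b‖ - ‖b‖ ^ 2)]

/-- Fourth moments contract under one step of the linear recursion. -/
lemma IsNoise.lintegral_norm_pow_four_step_le (h : IsNoise ν) {α : ℝ} (hα : 0 < α) (hα1 : α ≤ 1)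
    (l : E) : ∫⁻ w, ENNReal.ofReal (‖(1 - α) • l + √α • w‖ ^ 4) ∂ν
      ≤ ENNReal.ofReal (1 - α / 2) * ENNReal.ofReal (‖l‖ ^ 4)
        + ENNReal.ofReal (α * (32 * (∫ w, ‖w‖ ^ 2 ∂ν) ^ 2 + 3 * ∫ w, ‖w‖ ^ 4 ∂ν)) := by
  have := h.isProbabilityMeasure
  set a := (1 - α) • l with ha
  set m2 := ∫ w, ‖w‖ ^ 2 ∂ν
  set m4 := ∫ w, ‖w‖ ^ 4 ∂ν
  have hm2 : 0 ≤ m2 := integral_nonneg fun _ => by positivity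
  have hm4 : 0 ≤ m4 := integral_nonneg fun _ => by positivity
  have hs : √α ^ 2 = α := Real.sq_sqrt hα.le
  have hpt : ∀ w, ‖a + √α • w‖ ^ 4 ≤ ‖a‖ ^ 4 + (4 * ‖a‖ ^ 2 * √α) * inner ℝ a w
      + (8 * ‖a‖ ^ 2 * α) * ‖w‖ ^ 2 + (3 * α ^ 2) * ‖w‖ ^ 4 := by
    intro w
    refine (norm_add_pow_four_le a (√α • w)).trans (le_of_eq ?_)
    have h4 : √α ^ 4 = α ^ 2 := by
      rw [show √α ^ 4 = (√α ^ 2) ^ 2 by ring, hs]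
    rw [inner_smul_right, norm_smul √α w, Real.norm_of_nonneg (Real.sqrt_nonneg _), mul_pow,
      mul_pow,
      hs, h4]
    ring
  have i0 : Integrable (fun _ : E => ‖a‖ ^ 4) ν := integrable_const _
  have i1 : Integrable (fun w => (4 * ‖a‖ ^ 2 * √α) * inner ℝ a w) ν :=
    (h.integrable.const_inner a).const_mul _
  have i2 : Integrable (fun w => (8 * ‖a‖ ^ 2 * α) * ‖w‖ ^ 2) ν :=
    (h.integrable_norm_pow (by norm_num)).const_mul _
  have i3 : Integrable (fun w => (3 * α ^ 2) * ‖w‖ ^ 4) ν := h.integrable_norm_pow_four.const_mul _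
  have i01 : Integrable (fun w => ‖a‖ ^ 4 + (4 * ‖a‖ ^ 2 * √α) * inner ℝ a w) ν := i0.add i1
  have i012 : Integrable (fun w => ‖a‖ ^ 4 + (4 * ‖a‖ ^ 2 * √α) * inner ℝ a w
      + (8 * ‖a‖ ^ 2 * α) * ‖w‖ ^ 2) ν := i01.add i2
  have hI : ∫ w, (‖a‖ ^ 4 + (4 * ‖a‖ ^ 2 * √α) * inner ℝ a w
      + (8 * ‖a‖ ^ 2 * α) * ‖w‖ ^ 2 + (3 * α ^ 2) * ‖w‖ ^ 4) ∂ν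
      = ‖a‖ ^ 4 + 8 * ‖a‖ ^ 2 * α * m2 + 3 * α ^ 2 * m4 := by
    rw [integral_add i012 i3, integral_add i01 i2, integral_add i0 i1, integral_const_mul,
      integral_const_mul, integral_const_mul, integral_inner h.integrable, h.integral_eq_zero]
    simp [m2, m4]
  have hna : ‖a‖ = (1 - α) * ‖l‖ := by
    rw [ha, norm_smul, Real.norm_of_nonneg (by linarith)]
  have h1 : ‖a‖ ^ 4 ≤ (1 - α) * ‖l‖ ^ 4 := by
    rw [hna, mul_pow]
    exact mul_le_mul_of_nonneg_right
      (pow_le_of_le_one (by linarith) (by linarith) (by norm_num)) (by positivity)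
  have h2 : ‖a‖ ^ 2 ≤ ‖l‖ ^ 2 := by
    rw [hna]
    refine pow_le_pow_left₀ (by nlinarith [norm_nonneg l]) ?_ 2
    nlinarith [norm_nonneg l]
  have h3 : 8 * ‖a‖ ^ 2 * α * m2 ≤ α / 2 * ‖l‖ ^ 4 + α * (32 * m2 ^ 2) := by
    have : 8 * ‖a‖ ^ 2 * α * m2 ≤ 8 * ‖l‖ ^ 2 * α * m2 := by gcongr
    nlinarith [mul_nonneg hα.le (sq_nonneg (‖l‖ ^ 2 - 8 * m2))]
  have h4 : 3 * α ^ 2 * m4 ≤ α * (3 * m4) := by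
    have : α ^ 2 ≤ α := pow_le_of_le_one hα.le hα1 (by norm_num)
    nlinarith
  rw [← ENNReal.ofReal_mul (by linarith), ← ENNReal.ofReal_add
    (mul_nonneg (by linarith) (by positivity)) (by positivity)]
  refine (lintegral_mono fun w => ENNReal.ofReal_le_ofReal (hpt w)).trans ?_
  have i0123 : Integrable (fun w => ‖a‖ ^ 4 + (4 * ‖a‖ ^ 2 * √α) * inner ℝ a w
      + (8 * ‖a‖ ^ 2 * α) * ‖w‖ ^ 2 + (3 * α ^ 2) * ‖w‖ ^ 4) ν := i012.add i3
  rw [← ofReal_integral_eq_lintegral_ofReal i0123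
    (ae_of_all _ fun w => le_trans (by positivity) (hpt w)), hI]
  exact ENNReal.ofReal_le_ofReal (by nlinarith)

end Moments

/-- One step of the rescaled stochastic approximation recursion. -/
def scaledStep {E : Type*} [AddCommGroup E] [Module ℝ E] (U : E → E) (α : ℝ) (p : E × E) : E :=
  p.1 + α • (U p.1 - p.1) + √α • p.2

section MomentCoupling

variable {E : Type*} [NormedAddCommGroup E] [InnerProductSpace ℝ E] [FiniteDimensional ℝ E]
  [MeasurableSpace E] [BorelSpace E] {ν : Measure E} {c : E → ℝ} {γ : ℝ}

lemma measurable_scaledStep {U : E → E} (hU : Continuous U) (α : ℝ) :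
    Measurable (scaledStep U α) := by
  unfold scaledStep
  fun_prop

/-- One step of the linear recursion `l ↦ (1 - α) l + √α w`. -/
def linearStep {E : Type*} [AddCommGroup E] [Module ℝ E] (α : ℝ) (p : E × E) : E :=
  (1 - α) • p.1 + √α • p.2

lemma measurable_linearStep (α : ℝ) : Measurable (linearStep (E := E) α) := by
  unfold linearStep
  fun_prop

lemma IsNoise.lpBound_linearStep (h : IsNoise ν) {α : ℝ} (hα : 0 < α) (hα1 : α ≤ 1) {B : ℝ}
    (hB0 : 0 ≤ B)
    (hB : 2 * (32 * (∫ w, ‖w‖ ^ 2 ∂ν) ^ 2 + 3 * ∫ w, ‖w‖ ^ 4 ∂ν) ≤ B ^ 4) (k : ℕ) :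
    LpBound 4 (fun x : E => ‖x‖) (chainLaw (linearStep α) ν (Measure.dirac 0) k) id B := by
  have := h.isProbabilityMeasure
  rw [LpBound.four_iff_lintegral IsNormLike.of_norm hB0]
  induction k with
  | zero => simp [chainLaw]
  | succ k ih =>
    have := isProbabilityMeasure_chainLaw (ν := ν) (P₀ := Measure.dirac (0 : E))
      (measurable_linearStep α) k
    have hm : Measurable fun x : E => ENNReal.ofReal (‖x‖ ^ 4) := by fun_prop
    have hC : 0 ≤ 32 * (∫ w, ‖w‖ ^ 2 ∂ν) ^ 2 + 3 * ∫ w, ‖w‖ ^ 4 ∂ν := by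
      have : 0 ≤ ∫ w, ‖w‖ ^ 4 ∂ν := integral_nonneg fun _ => by positivity
      positivity
    rw [chainLaw]
    simp only [id] at ih ⊢
    have hm' : Measurable fun p : E × E => ENNReal.ofReal (‖linearStep α p‖ ^ 4) :=
      hm.comp (measurable_linearStep α)
    rw [lintegral_map hm (measurable_linearStep α), lintegral_prod _ hm'.aemeasurable]
    refine (lintegral_mono fun l => h.lintegral_norm_pow_four_step_le hα hα1 l).trans ?_
    rw [lintegral_add_right _ measurable_const, lintegral_const, measure_univ, mul_one,
      lintegral_const_mul _ hm]
    calc _ ≤ ENNReal.ofReal (1 - α / 2) * ENNReal.ofReal (B ^ 4)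
          + ENNReal.ofReal (α * (B ^ 4 / 2)) := by
          gcongr
          linarith
      _ = ENNReal.ofReal (B ^ 4) := by
          rw [← ENNReal.ofReal_mul (by linarith), ← ENNReal.ofReal_add
            (mul_nonneg (by linarith) (by positivity)) (by positivity)]
          congr 1
          ring

/-- A stationary law of the rescaled recursion can be coupled, arbitrarily closely in `L²`, to
a vector whose fourth moment is bounded uniformly in the stepsize. -/
theorem IsNoise.exists_coupling_four (h : IsNoise ν) (hc : IsNormLike c) (hγ0 : 0 ≤ γ)
    (hγ1 : γ < 1) : ∃ K, 0 ≤ K ∧ ∀ α : ℝ, 0 < α → α ≤ 1 → ∀ U : E → E,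
      (∀ x y, c (U x - U y) ≤ γ * c (x - y)) → U 0 = 0 → ∀ ρ : Measure E,
      IsProbabilityMeasure ρ → Integrable (fun x => ‖x‖ ^ 2) ρ →
      (ρ.prod ν).map (scaledStep U α) = ρ → ∀ η : ℝ, 0 < η → ∃ Q : Measure (E × E),
        IsProbabilityMeasure Q ∧ Q.map Prod.fst = ρ ∧ LpBound 4 c Q Prod.snd K ∧
          LpBound 2 c Q (fun p => p.1 - p.2) η := by
  have := h.isProbabilityMeasure
  obtain ⟨M, hM, hcM⟩ := hc.exists_le_norm
  set C := 2 * (32 * (∫ w, ‖w‖ ^ 2 ∂ν) ^ 2 + 3 * ∫ w, ‖w‖ ^ 4 ∂ν) with hC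
  have hC0 : 0 ≤ C := by
    have : 0 ≤ ∫ w, ‖w‖ ^ 4 ∂ν := integral_nonneg fun _ => by positivity
    positivity
  set B := C + 1 with hB
  have hB0 : 0 ≤ B := by positivity
  have hBC : C ≤ B ^ 4 := by
    have : B ≤ B ^ 4 := le_self_pow₀ (by linarith) (by norm_num)
    linarith
  have hcm := hc.continuous.measurable
  have h1γ : 0 < 1 - γ := by linarith
  set r := γ * (M * B) / (1 - γ) with hr
  have hr0 : 0 ≤ r := by positivity
  refine ⟨r + M * B, by positivity, fun α hα hα1 U hU hU0 ρ hρ hρ2 hst η hη => ?_⟩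
  have hUc := hc.continuous_of_lipschitz hU hγ0
  have hUm : Measurable U := hUc.measurable
  let f : (E × E × E) × E → E × E × E := fun q =>
    (scaledStep U α (q.1.1, q.2), scaledStep U α (q.1.2.1, q.2), linearStep α (q.1.2.2, q.2))
  have hsm := measurable_scaledStep hUc α
  have hf : Measurable f := by
    have := measurable_linearStep (E := E) α
    fun_prop
  let P₀ : Measure (E × E × E) := ρ.map fun y => (y, 0, 0)
  have hP₀ : IsProbabilityMeasure P₀ := Measure.isProbabilityMeasure_map (by fun_prop)
  let P := chainLaw f ν P₀
  have hP : ∀ k, IsProbabilityMeasure (P k) := isProbabilityMeasure_chainLaw hf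
  have hY : ∀ k, (P k).map Prod.fst = ρ := by
    intro k
    rw [← chainLaw_eq_of_stationary hst k]
    refine map_chainLaw hf hsm measurable_fst ?_ (fun s w => rfl) k
    rw [Measure.map_map measurable_fst (by fun_prop)]
    exact Measure.map_id
  have hL : ∀ k, LpBound 4 c (P k) (fun s => s.2.2) (M * B) := by
    intro k
    have h0 := h.lpBound_linearStep hα hα1 hB0 hBC k
    have h1 : (P k).map (fun s => s.2.2) = chainLaw (linearStep α) ν (Measure.dirac 0) k := by
      refine map_chainLaw hf (measurable_linearStep α) (by fun_prop) ?_ (fun s w => rfl) k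
      rw [Measure.map_map (by fun_prop) (by fun_prop)]
      change ρ.map (fun _ => (0 : E)) = _
      simp
    have h2 := (LpBound.of_map_eq (by fun_prop) measurable_id (by fun_prop) h1 h0).smul
      IsNormLike.of_norm M
    rw [abs_of_pos hM] at h2
    refine (eLpNorm_mono fun s => ?_).trans h2
    rw [Real.norm_of_nonneg (hc.nonneg _), Real.norm_of_nonneg (norm_nonneg _), norm_smul,
      Real.norm_of_nonneg hM.le]
    exact hcM _
  have hD : ∀ k, LpBound 4 c (P k) (fun s => s.2.1 - s.2.2) r := by
    intro k
    induction k with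
    | zero =>
      change LpBound 4 c P₀ _ r
      rw [LpBound.map_iff (by fun_prop) (by fun_prop) hcm]
      simp [LpBound, hc.map_zero]
    | succ k ih =>
      change LpBound 4 c (((P k).prod ν).map f) _ r
      rw [LpBound.map_iff hf (by fun_prop) hcm]
      have h1 := ih.prod_fst (ν := ν) (by fun_prop) hcm
      have h2 := (hL k).prod_fst (ν := ν) (by fun_prop) hcm
      have hbound := LpBound.of_le_add (X := fun ω => (f ω).2.1 - (f ω).2.2) (by norm_num) hc h1 h2
        (by fun_prop) (by fun_prop)
        (a := 1 - α * (1 - γ)) (b := α * γ) (by nlinarith) (by positivity) hr0 (by positivity) ?_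
      · refine hbound.mono_bound (le_of_eq ?_)
        rw [hr]
        field_simp
        ring
      · rintro ⟨⟨y, z, l⟩, w⟩
        have e : scaledStep U α (z, w) - linearStep α (l, w) = (1 - α) • (z - l) + α • U z := by
          simp only [scaledStep, linearStep]
          module
        have e1 : c (U z) ≤ γ * c z := by simpa [hU0] using hU z 0
        have e2 : c z ≤ c (z - l) + c l := by simpa using hc.add_le (z - l) l
        have e3 := hc.add_le ((1 - α) • (z - l)) (α • U z)
        rw [hc.smul_of_nonneg (by linarith), hc.smul_of_nonneg hα.le] at e3
        change c (scaledStep U α (z, w) - linearStep α (l, w)) ≤ _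
        rw [e]
        have e4 : α * c (U z) ≤ α * (γ * (c (z - l) + c l)) := by gcongr; exact e1.trans (by gcongr)
        simp only
        linarith
  have hY0 : ∀ k, LpBound 4 c (P k) (fun s => s.2.1) (r + M * B) := by
    intro k
    have := (hD k).add (by norm_num) hc (hL k) (by fun_prop) (by fun_prop) hr0 (by positivity)
    simpa using this
  obtain ⟨s₀, hs₀, hρs⟩ : ∃ s₀, 0 ≤ s₀ ∧ LpBound 2 c ρ id s₀ := by
    refine ⟨M * √(∫ x, ‖x‖ ^ 2 ∂ρ), by positivity, ?_⟩
    rw [LpBound.two_iff_lintegral hc (by positivity), mul_pow, Real.sq_sqrt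
      (integral_nonneg fun _ => by positivity), ← integral_const_mul,
      ofReal_integral_eq_lintegral_ofReal (hρ2.const_mul _) (ae_of_all _ fun _ => by positivity)]
    refine lintegral_mono fun x => ENNReal.ofReal_le_ofReal ?_
    rw [← mul_pow]
    exact pow_le_pow_left₀ (hc.nonneg _) (hcM _) 2
  have hq0 : 0 ≤ 1 - α * (1 - γ) := by nlinarith
  have hq1 : 1 - α * (1 - γ) < 1 := by nlinarith
  have hZ : ∀ k, LpBound 2 c (P k) (fun s => s.1 - s.2.1) ((1 - α * (1 - γ)) ^ k * s₀) := by
    intro k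
    induction k with
    | zero =>
      change LpBound 2 c P₀ _ _
      rw [LpBound.map_iff (by fun_prop) (by fun_prop) hcm]
      simpa [Function.id_def] using hρs
    | succ k ih =>
      change LpBound 2 c (((P k).prod ν).map f) _ _
      rw [LpBound.map_iff hf (by fun_prop) hcm]
      have h1 := (ih.prod_fst (ν := ν) (by fun_prop) hcm).smul hc (1 - α * (1 - γ))
      rw [abs_of_nonneg hq0, ← mul_assoc, ← pow_succ'] at h1
      refine h1.mono hc ?_
      rintro ⟨⟨y, z, l⟩, w⟩
      have e : scaledStep U α (y, w) - scaledStep U α (z, w)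
          = (1 - α) • (y - z) + α • (U y - U z) := by
        simp only [scaledStep]
        module
      have e1 := hU y z
      have e3 := hc.add_le ((1 - α) • (y - z)) (α • (U y - U z))
      rw [hc.smul_of_nonneg (by linarith), hc.smul_of_nonneg hα.le] at e3
      change c (scaledStep U α (y, w) - scaledStep U α (z, w)) ≤ _
      rw [e, hc.smul_of_nonneg hq0]
      have e4 : α * c (U y - U z) ≤ α * (γ * c (y - z)) := by gcongr
      simp only
      linarith
  obtain ⟨k, hk⟩ : ∃ k, (1 - α * (1 - γ)) ^ k * s₀ < η := by
    have ht : Tendsto (fun k => (1 - α * (1 - γ)) ^ k * s₀) atTop (𝓝 (0 * s₀)) :=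
      (tendsto_pow_atTop_nhds_zero_of_lt_one hq0 hq1).mul_const _
    rw [zero_mul] at ht
    exact (ht.eventually_lt_const hη).exists
  have hg : Measurable fun s : E × E × E => (s.1, s.2.1) := by fun_prop
  refine ⟨(P k).map fun s => (s.1, s.2.1), Measure.isProbabilityMeasure_map hg.aemeasurable,
    ?_, ?_, ?_⟩
  · rw [Measure.map_map measurable_fst hg]
    exact hY k
  · rw [LpBound.map_iff hg (by fun_prop) hcm]
    exact hY0 k
  · rw [LpBound.map_iff hg (by fun_prop) hcm]
    exact (hZ k).mono_bound hk.le

end MomentCoupling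

section StationaryBounds

variable {E : Type*} [NormedAddCommGroup E] [InnerProductSpace ℝ E] [FiniteDimensional ℝ E]
  [MeasurableSpace E] [BorelSpace E] {ν ρ : Measure E} {c : E → ℝ} {γ : ℝ}

lemma LpBound.of_le_const_add {Ω : Type*} [MeasurableSpace Ω] {P : Measure Ω}
    [IsProbabilityMeasure P] {X Z : Ω → E} (hc : IsNormLike c) {δ b s : ℝ}
    (hZ : LpBound 2 c P Z s) (hZm : Measurable Z) (hδ : 0 ≤ δ) (hb : 0 ≤ b) (hs : 0 ≤ s)
    (h : ∀ ω, c (X ω) ≤ δ + b * c (Z ω)) : LpBound 2 c P X (δ + b * s) := by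
  have hcm := hc.continuous.measurable
  have hZ' := hZ.smul hc b
  rw [abs_of_nonneg hb] at hZ'
  calc eLpNorm (fun ω => c (X ω)) 2 P
      ≤ eLpNorm ((fun _ => δ) + fun ω => c (b • Z ω)) 2 P := by
        refine eLpNorm_mono_real fun ω => ?_
        rw [Real.norm_of_nonneg (hc.nonneg _), Pi.add_apply, hc.smul_of_nonneg hb]
        exact h ω
    _ ≤ eLpNorm (fun _ => δ) 2 P + eLpNorm (fun ω => c (b • Z ω)) 2 P :=
        eLpNorm_add_le aestronglyMeasurable_const
          (hcm.comp (hZm.const_smul b)).aestronglyMeasurable (by norm_num)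
    _ ≤ ENNReal.ofReal δ + ENNReal.ofReal (b * s) := by
        refine add_le_add ?_ hZ'
        rw [eLpNorm_const _ (by norm_num) (NeZero.ne P)]
        simp [Real.enorm_of_nonneg hδ]
    _ = ENNReal.ofReal (δ + b * s) := (ENNReal.ofReal_add hδ (by positivity)).symm

lemma LpBound.prod_snd {S Ω V : Type*} [MeasurableSpace S] [MeasurableSpace Ω] [MeasurableSpace V]
    {P : Measure S} {Q : Measure Ω} [IsProbabilityMeasure P] [SFinite Q] {p : ℝ≥0∞} {c : V → ℝ}
    {X : Ω → V} {r : ℝ} (hX : Measurable X) (hcm : Measurable c) (h : LpBound p c Q X r) :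
    LpBound p c (P.prod Q) (fun q => X q.2) r :=
  LpBound.of_map_eq measurable_snd hX hcm (by simp) h

lemma LpBound.two_of_four {Ω : Type*} [MeasurableSpace Ω] {P : Measure Ω}
    [IsProbabilityMeasure P] {X : Ω → E} {s : ℝ} (hc : IsNormLike c) (hX : Measurable X)
    (h : LpBound 4 c P X s) : LpBound 2 c P X s :=
  (eLpNorm_le_eLpNorm_of_exponent_le (by norm_num)
    (hc.continuous.measurable.comp hX).aestronglyMeasurable).trans h

lemma lpBound_id_of_coupling (hc : IsNormLike c) {K : ℝ} (hK : 0 ≤ K)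
    (h : ∀ η : ℝ, 0 < η → ∃ Q : Measure (E × E), IsProbabilityMeasure Q ∧ Q.map Prod.fst = ρ ∧
      LpBound 4 c Q Prod.snd K ∧ LpBound 2 c Q (fun p => p.1 - p.2) η) :
    LpBound 2 c ρ id K := by
  refine LpBound.of_forall_pos fun η hη => ?_
  obtain ⟨Q, _, h1, h2, h3⟩ := h η hη
  rw [← h1, LpBound.map_iff measurable_fst measurable_id hc.continuous.measurable]
  have := (h2.two_of_four hc measurable_snd).add (by norm_num) hc h3 measurable_snd (by fun_prop)
    hK hη.le
  simpa using this

/-- A Lipschitz perturbation that is small on a large ball is small in `L²`. -/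
lemma lpBound_of_coupling (hc : IsNormLike c) {K : ℝ} (hK : 0 ≤ K)
    (h : ∀ η : ℝ, 0 < η → ∃ Q : Measure (E × E), IsProbabilityMeasure Q ∧ Q.map Prod.fst = ρ ∧
      LpBound 4 c Q Prod.snd K ∧ LpBound 2 c Q (fun p => p.1 - p.2) η)
    {H : E → E} {L δ R : ℝ} (hL : 0 < L) (hδ : 0 ≤ δ) (hR : 0 < R) (hHm : Measurable H)
    (hH : ∀ x y, c (H x - H y) ≤ L * c (x - y)) (hH0 : H 0 = 0) (hHR : ∀ x, c x ≤ R → c (H x) ≤ δ) :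
    LpBound 2 c ρ H (δ + L / R * K ^ 2) := by
  have hcm := hc.continuous.measurable
  refine LpBound.of_forall_pos fun η hη => ?_
  obtain ⟨Q, _, h1, h2, h3⟩ := h (η / L) (by positivity)
  rw [← h1, LpBound.map_iff measurable_fst hHm hcm]
  have hZm : Measurable fun p : E × E => c p.2 • p.2 := by fun_prop
  have hZ : LpBound 2 c Q (fun p => c p.2 • p.2) (K ^ 2) := by
    rw [LpBound.two_iff_lintegral hc (by positivity)]
    rw [LpBound.four_iff_lintegral hc hK] at h2
    rw [← pow_mul]
    convert h2 using 4 with p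
    rw [hc.smul_of_nonneg (hc.nonneg _)]
    ring
  have h4 : LpBound 2 c Q (fun p => H p.2) (δ + L / R * K ^ 2) := by
    refine LpBound.of_le_const_add hc hZ hZm hδ (by positivity) (by positivity) fun p => ?_
    rw [hc.smul_of_nonneg (hc.nonneg _)]
    have hp := hc.nonneg p.2
    by_cases hpR : c p.2 ≤ R
    · exact (hHR _ hpR).trans (le_add_of_nonneg_right (by positivity))
    · have e : c (H p.2) ≤ L * c p.2 := by simpa [hH0] using hH p.2 0
      have e1 : c p.2 ≤ c p.2 * c p.2 / R := by
        rw [le_div_iff₀ hR]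
        gcongr
        exact (not_le.1 hpR).le
      calc c (H p.2) ≤ L * (c p.2 * c p.2 / R) := e.trans (by gcongr)
        _ = L / R * (c p.2 * c p.2) := by ring
        _ ≤ _ := le_add_of_nonneg_left hδ
  have h5 := LpBound.of_le_add (X := fun p : E × E => H p.1) (by norm_num) hc h4 h3 (by fun_prop)
    (by fun_prop) (a := 1) (b := L) zero_le_one hL.le (by positivity) (by positivity) fun p => by
      have e1 := hc.add_le (H p.2) (H p.1 - H p.2)
      rw [add_sub_cancel] at e1
      linarith [hH p.1 p.2]
  refine h5.mono_bound (le_of_eq ?_)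
  field_simp

lemma IsNoise.exists_lpBound_sumLaw (h : IsNoise ν) (hc : IsNormLike c) :
    ∃ C, 0 ≤ C ∧ ∀ α τ : ℝ, 0 < α → ∀ k : ℕ, k * α ≤ τ →
      LpBound 2 c (sumLaw ν (√α) k) id (C * √τ) := by
  obtain ⟨M, hM, hcM⟩ := hc.exists_le_norm
  have hI : 0 ≤ ∫ x, ‖x‖ ^ 2 ∂ν := integral_nonneg fun _ => by positivity
  refine ⟨M * √(∫ x, ‖x‖ ^ 2 ∂ν), by positivity, fun α τ hα k hk => ?_⟩
  have hτ : 0 ≤ τ := le_trans (by positivity) hk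
  rw [LpBound.two_iff_lintegral hc (by positivity), mul_pow, mul_pow, Real.sq_sqrt hI,
    Real.sq_sqrt hτ]
  have hm : Measurable fun x : E => ENNReal.ofReal (‖x‖ ^ 2) := by fun_prop
  calc _ ≤ ∫⁻ x, ENNReal.ofReal (M ^ 2) * ENNReal.ofReal (‖x‖ ^ 2) ∂sumLaw ν (√α) k := by
        refine lintegral_mono fun x => ?_
        rw [← ENNReal.ofReal_mul (by positivity), ← mul_pow]
        exact ENNReal.ofReal_le_ofReal (pow_le_pow_left₀ (hc.nonneg _) (hcM _) 2)
    _ = ENNReal.ofReal (M ^ 2 * (k * (α * ∫ x, ‖x‖ ^ 2 ∂ν))) := by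
        rw [lintegral_const_mul _ hm, lintegral_norm_sq_sumLaw h, Real.sq_sqrt hα.le,
          ← ENNReal.ofReal_mul (by positivity)]
    _ ≤ _ := by
        refine ENNReal.ofReal_le_ofReal ?_
        nlinarith [mul_le_mul_of_nonneg_right hk (mul_nonneg (sq_nonneg M) hI)]

end StationaryBounds

/-- The law of the Euler step `y + τ (G y - y) + s` for independent `y` and `s`. -/
def eulerLaw {E : Type*} [MeasurableSpace E] [AddCommGroup E] [Module ℝ E] (G : E → E) (τ : ℝ)
    (ρ σ : Measure E) : Measure E :=
  (ρ.prod σ).map fun p => p.1 + τ • (G p.1 - p.1) + p.2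

section Euler

variable {E : Type*} [NormedAddCommGroup E] [InnerProductSpace ℝ E] [FiniteDimensional ℝ E]
  [MeasurableSpace E] [BorelSpace E] {ν ρ ρ' σ σ' : Measure E} {c : E → ℝ} {γ τ : ℝ} {G : E → E}

lemma isProbabilityMeasure_eulerLaw [IsProbabilityMeasure ρ] [IsProbabilityMeasure σ]
    (hG : Measurable G) : IsProbabilityMeasure (eulerLaw G τ ρ σ) :=
  Measure.isProbabilityMeasure_map (by fun_prop)

lemma chainLaw_prod_sumLaw [IsProbabilityMeasure ν] [IsProbabilityMeasure ρ] (a : ℝ) (k : ℕ) :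
    chainLaw (fun q : (E × E) × E => (q.1.1, q.1.2 + a • q.2)) ν (ρ.prod (Measure.dirac 0)) k
      = ρ.prod (sumLaw ν a k) := by
  induction k with
  | zero => rfl
  | succ k ih =>
    have h1 : ρ.prod (sumLaw ν a (k + 1))
        = (ρ.prod ((sumLaw ν a k).prod ν)).map (Prod.map id fun p => p.1 + a • p.2) := by
      rw [← Measure.map_prod_map _ _ measurable_id (by fun_prop), Measure.map_id]
      rfl
    rw [h1, chainLaw, ih, ← Measure.prodAssoc_prod, Measure.map_map (by fun_prop) (by fun_prop)]
    rfl

lemma near_eulerLaw_eulerLaw [IsProbabilityMeasure ρ] [IsProbabilityMeasure ρ']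
    [IsProbabilityMeasure σ]
    [IsProbabilityMeasure σ'] (hc : IsNormLike c) (hGm : Measurable G)
    (hG : ∀ x y, c (G x - G y) ≤ γ * c (x - y)) (hγ0 : 0 ≤ γ) (hτ0 : 0 ≤ τ) (hτ1 : τ ≤ 1) {r q : ℝ}
    (hr : 0 ≤ r) (hq : 0 ≤ q) (h : Near c ρ ρ' r) (h' : Near c σ σ' q) :
    Near c (eulerLaw G τ ρ σ) (eulerLaw G τ ρ' σ') ((1 - (1 - γ) * τ) * r + q) := by
  have hcm := hc.continuous.measurable
  obtain ⟨π, h1, h2⟩ := h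
  obtain ⟨π', h1', h2'⟩ := h'
  have := h1.isProbabilityMeasure
  have := h1'.isProbabilityMeasure
  have m1 : Measurable fun p : E × E => p.1 + τ • (G p.1 - p.1) + p.2 := by fun_prop
  have hκ : 0 ≤ 1 - (1 - γ) * τ := by nlinarith
  have e1 : eulerLaw G τ ρ σ
      = (π.prod π').map fun p => p.1.1 + τ • (G p.1.1 - p.1.1) + p.2.1 := by
    rw [eulerLaw, ← h1.1, ← h1'.1, Measure.map_prod_map _ _ measurable_fst measurable_fst,
      Measure.map_map m1 (by fun_prop)]
    rfl
  have e2 : eulerLaw G τ ρ' σ'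
      = (π.prod π').map fun p => p.1.2 + τ • (G p.1.2 - p.1.2) + p.2.2 := by
    rw [eulerLaw, ← h1.2, ← h1'.2, Measure.map_prod_map _ _ measurable_snd measurable_snd,
      Measure.map_map m1 (by fun_prop)]
    rfl
  rw [e1, e2]
  have hX : Measurable fun p : (E × E) × (E × E) => p.1.1 + τ • (G p.1.1 - p.1.1) + p.2.1 := by
    fun_prop
  have hY : Measurable fun p : (E × E) × (E × E) => p.1.2 + τ • (G p.1.2 - p.1.2) + p.2.2 := by
    fun_prop
  have hsub : Measurable fun p : E × E => p.1 - p.2 := by fun_prop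
  refine Near.of_map hc hX hY ?_
  have b1 := h2.prod_fst (ν := π') hsub hcm
  have b2 := h2'.prod_snd (P := π) hsub hcm
  have b3 := LpBound.of_le_add (X := fun p : (E × E) × (E × E) =>
    p.1.1 + τ • (G p.1.1 - p.1.1) + p.2.1 - (p.1.2 + τ • (G p.1.2 - p.1.2) + p.2.2))
    (by norm_num) hc b1 b2 (by fun_prop) (by fun_prop) (a := 1 - (1 - γ) * τ) (b := 1)
    hκ zero_le_one hr hq ?_
  · rwa [one_mul] at b3
  · rintro ⟨⟨x, y⟩, s, t⟩
    have e : x + τ • (G x - x) + s - (y + τ • (G y - y) + t)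
        = (1 - τ) • (x - y) + τ • (G x - G y) + (s - t) := by module
    simp only
    rw [e]
    have i1 := hc.add_le ((1 - τ) • (x - y) + τ • (G x - G y)) (s - t)
    have i2 := hc.add_le ((1 - τ) • (x - y)) (τ • (G x - G y))
    rw [hc.smul_of_nonneg (by linarith), hc.smul_of_nonneg hτ0] at i2
    have i3 := mul_le_mul_of_nonneg_left (hG x y) hτ0
    linarith

/-- Over a time `τ`, a stationary chain is well approximated by a single Euler step. -/
lemma near_eulerLaw_of_stationary [IsProbabilityMeasure ν] [IsProbabilityMeasure ρ]
    (hc : IsNormLike c) (hγ0 : 0 ≤ γ) (hγ1 : γ < 1) {U : E → E} {α K δ C : ℝ} {n : ℕ}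
    (hU : ∀ x y, c (U x - U y) ≤ γ * c (x - y)) (hU0 : U 0 = 0)
    (hG : ∀ x y, c (G x - G y) ≤ γ * c (x - y)) (hG0 : G 0 = 0) (hα : 0 < α)
    (hK : 0 ≤ K) (hδ : 0 ≤ δ) (hC : 0 ≤ C) (hn : n * α ≤ τ) (hn' : τ ≤ n * α + α)
    (hst : (ρ.prod ν).map (scaledStep U α) = ρ) (hρ : LpBound 2 c ρ id K)
    (hUG : LpBound 2 c ρ (fun y => U y - G y) δ)
    (hS : ∀ k ≤ n, LpBound 2 c (sumLaw ν (√α) k) id C) :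
    Near c ρ (eulerLaw G τ ρ (sumLaw ν (√α) n))
      (τ * (δ + 2 * (2 * K * τ + C)) + 2 * K * α) := by
  have hcm := hc.continuous.measurable
  have hUc := hc.continuous_of_lipschitz hU hγ0
  have hGc := hc.continuous_of_lipschitz hG hγ0
  have hsm := measurable_scaledStep hUc α
  have hUm := hUc.measurable
  have hGm := hGc.measurable
  let f : (E × E × E) × E → E × E × E := fun q =>
    (q.1.1, scaledStep U α (q.1.2.1, q.2), q.1.2.2 + √α • q.2)
  have hf : Measurable f := by fun_prop
  let P₀ : Measure (E × E × E) := ρ.map fun y => (y, y, 0)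
  have hP₀ : IsProbabilityMeasure P₀ := Measure.isProbabilityMeasure_map (by fun_prop)
  let P := chainLaw f ν P₀
  have hP : ∀ k, IsProbabilityMeasure (P k) := isProbabilityMeasure_chainLaw hf
  have hY : ∀ k, (P k).map (fun s => s.2.1) = ρ := by
    intro k
    rw [← chainLaw_eq_of_stationary hst k]
    refine map_chainLaw hf hsm (by fun_prop) ?_ (fun s w => rfl) k
    rw [Measure.map_map (by fun_prop) (by fun_prop)]
    exact Measure.map_id
  have hYS : ∀ k, (P k).map (fun s => (s.1, s.2.2)) = ρ.prod (sumLaw ν (√α) k) := by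
    intro k
    rw [← chainLaw_prod_sumLaw]
    refine map_chainLaw hf (by fun_prop) (by fun_prop) ?_ (fun s w => rfl) k
    rw [Measure.map_map (by fun_prop) (by fun_prop), Measure.prod_dirac]
    rfl
  have h0 : ∀ k, (P k).map (fun s => s.1) = ρ := by
    intro k
    have : (fun s : E × E × E => s.1) = Prod.fst ∘ fun s => (s.1, s.2.2) := rfl
    rw [this, ← Measure.map_map measurable_fst (by fun_prop), hYS]
    simp
  have hS' : ∀ k ≤ n, LpBound 2 c (P k) (fun s => s.2.2) C := by
    intro k hk
    refine LpBound.of_map_eq (X := Prod.snd) (f := fun s : E × E × E => (s.1, s.2.2)) (by fun_prop)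
      measurable_snd hcm (hYS k) ?_
    have := (hS k hk).prod_snd (P := ρ) measurable_id hcm
    exact this
  have hd : ∀ {V : E → E}, (∀ x y, c (V x - V y) ≤ γ * c (x - y)) → V 0 = 0 → ∀ y,
      c (V y - y) ≤ 2 * c y := by
    intro V hV hV0 y
    have e1 : c (V y) ≤ γ * c y := by simpa [hV0] using hV y 0
    have e2 := hc.sub_le (V y) y
    nlinarith [hc.nonneg y]
  have hρY : ∀ k, LpBound 2 c (P k) (fun s => s.2.1) K := fun k =>
    LpBound.of_map_eq (X := id) (by fun_prop) measurable_id hcm (hY k) hρ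
  have hD : ∀ k, LpBound 2 c (P k) (fun s => s.2.1 - s.1 - s.2.2) (2 * K * (k * α)) := by
    intro k
    induction k with
    | zero =>
      change LpBound 2 c P₀ _ _
      rw [LpBound.map_iff (by fun_prop) (by fun_prop) hcm]
      simp [LpBound, hc.map_zero]
    | succ k ih =>
      change LpBound 2 c (((P k).prod ν).map f) _ _
      rw [LpBound.map_iff hf (by fun_prop) hcm]
      have h1 := ih.prod_fst (ν := ν) (by fun_prop) hcm
      have h2 := (hρY k).prod_fst (ν := ν) (by fun_prop) hcm
      refine (LpBound.of_le_add (by norm_num) hc h1 h2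
        (by fun_prop) (by fun_prop) (a := 1) (b := α * 2) zero_le_one (by positivity)
        (by positivity) hK ?_).mono_bound (le_of_eq ?_)
      · rintro ⟨⟨y, z, l⟩, w⟩
        have e : scaledStep U α (z, w) - y - (l + √α • w) = (z - y - l) + α • (U z - z) := by
          simp only [scaledStep]
          module
        change c (scaledStep U α (z, w) - y - (l + √α • w)) ≤ 1 * c (z - y - l) + α * 2 * c z
        rw [e]
        have e3 := hc.add_le (z - y - l) (α • (U z - z))
        rw [hc.smul_of_nonneg hα.le] at e3
        nlinarith [hd hU hU0 z]
      · push_cast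
        ring
  have hR : ∀ k ≤ n, LpBound 2 c (P k) (fun s => s.2.1 - (s.1 + (k * α) • (G s.1 - s.1) + s.2.2))
      (k * α * (δ + 2 * (2 * K * τ + C))) := by
    intro k
    have hτ : 0 ≤ τ := le_trans (by positivity) hn
    induction k with
    | zero =>
      intro _
      change LpBound 2 c P₀ _ _
      rw [LpBound.map_iff (by fun_prop) (by fun_prop) hcm]
      simp [LpBound, hc.map_zero]
    | succ k ih =>
      intro hk
      have hkn : k ≤ n := by omega
      change LpBound 2 c (((P k).prod ν).map f) _ _
      rw [LpBound.map_iff hf (by fun_prop) hcm]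
      have h1 := (ih hkn).prod_fst (ν := ν) (by fun_prop) hcm
      have h2 : LpBound 2 c (P k) (fun s => U s.2.1 - G s.2.1) δ :=
        LpBound.of_map_eq (X := fun y => U y - G y) (by fun_prop) (by fun_prop) hcm (hY k) hUG
      have h3 := (hD k).add (by norm_num) hc (hS' k hkn) (by fun_prop) (by fun_prop)
        (by positivity) hC
      have hkτ : k * α ≤ τ := le_trans (by gcongr) hn
      have h4 : LpBound 2 c (P k) (fun s => (U s.2.1 - s.2.1) - (G s.1 - s.1))
          (1 * δ + 2 * (2 * K * τ + C)) := by
        refine LpBound.of_le_add (by norm_num) hc h2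
          (h3.mono_bound (s := 2 * K * τ + C) (by gcongr)) (by fun_prop) (by fun_prop) zero_le_one
          zero_le_two hδ (by positivity) ?_
        rintro ⟨y, z, l⟩
        have e : U z - z - (G y - y) = (U z - G z) + ((G z - G y) - (z - y)) := by abel
        have e' : z - y - l + l = z - y := by abel
        simp only
        rw [e, e']
        have i1 := hc.add_le (U z - G z) ((G z - G y) - (z - y))
        have i2 := hc.sub_le (G z - G y) (z - y)
        nlinarith [hG z y, hc.nonneg (z - y)]
      have h5 := h4.prod_fst (ν := ν) (by fun_prop) hcm
      refine (LpBound.of_le_add (by norm_num) hc h1 h5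
        (by fun_prop) (by fun_prop) (a := 1) (b := α) zero_le_one (by positivity)
        (by positivity) (by positivity) ?_).mono_bound (le_of_eq ?_)
      · rintro ⟨⟨y, z, l⟩, w⟩
        have e : scaledStep U α (z, w) - (y + (((k + 1 : ℕ) : ℝ) * α) • (G y - y) + (l + √α • w))
            = (z - (y + (k * α) • (G y - y) + l)) + α • (U z - z - (G y - y)) := by
          simp only [scaledStep]
          push_cast
          module
        change c (scaledStep U α (z, w) - (y + (((k + 1 : ℕ) : ℝ) * α) • (G y - y)
          + (l + √α • w))) ≤ 1 * c (z - (y + (k * α) • (G y - y) + l))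
          + α * c (U z - z - (G y - y))
        rw [e]
        have e3 := hc.add_le (z - (y + (k * α) • (G y - y) + l)) (α • (U z - z - (G y - y)))
        rw [hc.smul_of_nonneg hα.le] at e3
        linarith
      · push_cast
        ring
  have hτ : 0 ≤ τ := le_trans (by positivity) hn
  have hlast : LpBound 2 c (P n) (fun s => s.2.1 - (s.1 + τ • (G s.1 - s.1) + s.2.2))
      (1 * (τ * (δ + 2 * (2 * K * τ + C))) + (2 * α) * K) := by
    have hy : LpBound 2 c (P n) (fun s => s.1) K :=
      LpBound.of_map_eq (X := id) (by fun_prop) measurable_id hcm (h0 n) hρ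
    refine LpBound.of_le_add (by norm_num) hc
      ((hR n le_rfl).mono_bound (s := τ * (δ + 2 * (2 * K * τ + C))) (by gcongr))
      hy (by fun_prop) (by fun_prop) zero_le_one (by positivity) (by positivity) hK ?_
    rintro ⟨y, z, l⟩
    have e : z - (y + τ • (G y - y) + l)
        = z - (y + (n * α) • (G y - y) + l) - (τ - n * α) • (G y - y) := by module
    simp only
    rw [e]
    have i1 := hc.sub_le (z - (y + (n * α) • (G y - y) + l)) ((τ - n * α) • (G y - y))
    rw [hc.smul_of_nonneg (by linarith)] at i1
    have i2 : (τ - n * α) * c (G y - y) ≤ α * (2 * c y) :=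
      mul_le_mul (by linarith) (hd hG hG0 y) (hc.nonneg _) hα.le
    linarith
  have hnear := Near.of_map hc (by fun_prop) (by fun_prop) hlast
  rw [hY n] at hnear
  have e : eulerLaw G τ ρ (sumLaw ν (√α) n)
      = (P n).map fun s => s.1 + τ • (G s.1 - s.1) + s.2.2 := by
    rw [eulerLaw, ← hYS n, Measure.map_map (by fun_prop) (by fun_prop)]
    rfl
  rw [e]
  exact hnear.mono_bound (le_of_eq (by ring))

end Euler

section Cauchy

variable {E : Type*} [NormedAddCommGroup E] [InnerProductSpace ℝ E] [FiniteDimensional ℝ E]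
  [MeasurableSpace E] [BorelSpace E] {μ ν : Measure E} {c : E → ℝ} {γ : ℝ} {G : E → E}

lemma Near.refl (hc : IsNormLike c) (μ : Measure E) : Near c μ μ 0 := by
  have h := Near.of_map hc (P := μ) (X := id) (Y := id) (r := 0) measurable_id measurable_id
    (by simp [LpBound, hc.map_zero])
  rwa [Measure.map_id] at h

/-- Iterating an affine contraction of the transport distance. -/
lemma Near.of_contraction {κ e r₀ s : ℝ} (hκ : 0 < κ) (hκ1 : κ ≤ 1) (he : 0 ≤ e) (hr₀ : 0 ≤ r₀)
    (h0 : Near c μ ν r₀) (h : ∀ r, 0 ≤ r → Near c μ ν r → Near c μ ν ((1 - κ) * r + e))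
    (hs : e / κ < s) : Near c μ ν s := by
  have hk : ∀ k : ℕ, Near c μ ν ((1 - κ) ^ k * r₀ + e / κ) := by
    intro k
    induction k with
    | zero => exact h0.mono_bound (by simp; positivity)
    | succ k ih =>
      have h1 : 0 ≤ 1 - κ := by linarith
      refine (h _ (by positivity) ih).mono_bound (le_of_eq ?_)
      field_simp
      ring
  have ht : Tendsto (fun k : ℕ => (1 - κ) ^ k * r₀ + e / κ) atTop (𝓝 (0 * r₀ + e / κ)) :=
    ((tendsto_pow_atTop_nhds_zero_of_lt_one (by linarith) (by linarith)).mul_const _).add_const _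
  rw [zero_mul, zero_add] at ht
  obtain ⟨k, hk'⟩ := (ht.eventually_lt_const hs).exists
  exact (hk k).mono_bound hk'.le

/-- Two families of laws that are both almost invariant under the same Euler steps merge. -/
theorem eventually_near_prod {l l' : Filter ℝ} {ρ ρ' : ℝ → Measure E} {σ : ℝ → Measure E}
    (hσ : ∀ τ, IsProbabilityMeasure (σ τ)) (hc : IsNormLike c) (hγ0 : 0 ≤ γ) (hγ1 : γ < 1)
    (hG : ∀ x y, c (G x - G y) ≤ γ * c (x - y)) {K K' : ℝ} (hK : 0 ≤ K) (hK' : 0 ≤ K')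
    (hρ : ∀ᶠ α in l, IsProbabilityMeasure (ρ α) ∧ LpBound 2 c (ρ α) id K)
    (hρ' : ∀ᶠ α in l', IsProbabilityMeasure (ρ' α) ∧ LpBound 2 c (ρ' α) id K')
    (hb : ∀ ζ > 0, ∀ᶠ τ in 𝓝[>] 0, ∀ᶠ α in l, Near c (ρ α) (eulerLaw G τ (ρ α) (σ τ)) (τ * ζ))
    (hb' : ∀ ζ > 0, ∀ᶠ τ in 𝓝[>] 0, ∀ᶠ α in l',
      Near c (ρ' α) (eulerLaw G τ (ρ' α) (σ τ)) (τ * ζ)) {η : ℝ} (hη : 0 < η) :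
    ∀ᶠ p in l ×ˢ l', Near c (ρ p.1) (ρ' p.2) η := by
  have hGm := (hc.continuous_of_lipschitz hG hγ0).measurable
  have h1γ : 0 < 1 - γ := by linarith
  set ζ := η * (1 - γ) / 4 with hζ
  have hζ0 : 0 < ζ := by positivity
  have h1 : ∀ᶠ τ : ℝ in 𝓝[>] 0, τ ∈ Set.Ioo (0 : ℝ) 1 := Ioo_mem_nhdsGT one_pos
  obtain ⟨τ, h2, h3, hτ0, hτ1⟩ := ((hb ζ hζ0).and ((hb' ζ hζ0).and h1)).exists
  filter_upwards [(hρ.and h2).prod_mk (hρ'.and h3)] with p hp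
  obtain ⟨⟨⟨_, b1⟩, e1⟩, ⟨_, b2⟩, e2⟩ := hp
  have := hσ τ
  have := isProbabilityMeasure_eulerLaw (ρ := ρ p.1) (σ := σ τ) (τ := τ) hGm
  have := isProbabilityMeasure_eulerLaw (ρ := ρ' p.2) (σ := σ τ) (τ := τ) hGm
  have hκ1 : (1 - γ) * τ ≤ 1 := by nlinarith
  refine Near.of_contraction (κ := (1 - γ) * τ) (e := 2 * (τ * ζ)) (by positivity) hκ1
    (by positivity) (add_nonneg hK hK') (Near.exists_of_integrable hc b1 b2 hK hK')
    (fun r hr hr' => ?_) ?_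
  · have e3 := near_eulerLaw_eulerLaw hc hGm hG hγ0 hτ0.le hτ1.le hr le_rfl hr' (Near.refl hc (σ τ))
    have hr1 : 0 ≤ (1 - (1 - γ) * τ) * r := mul_nonneg (by linarith) hr
    refine ((e1.trans hc e3 (by positivity) (by linarith)).trans hc (e2.symm hc)
      (by positivity) (by positivity)).mono_bound (le_of_eq ?_)
    ring
  · rw [div_lt_iff₀ (by positivity), hζ]
    nlinarith [mul_pos hη (mul_pos h1γ hτ0)]

end Cauchy

section Block

variable {d : ℕ} {ν : Measure (EuclideanSpace ℝ (Fin d))} {c : EuclideanSpace ℝ (Fin d) → ℝ}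
  {γ : ℝ} {G : EuclideanSpace ℝ (Fin d) → EuclideanSpace ℝ (Fin d)}
  {U : ℝ → EuclideanSpace ℝ (Fin d) → EuclideanSpace ℝ (Fin d)}
  {ρ : ℝ → Measure (EuclideanSpace ℝ (Fin d))}

/-- Stationary laws of the rescaled recursion have bounded second moments, and are almost
invariant under a short Euler step of the limiting drift driven by Gaussian noise. -/
theorem IsNoise.exists_lpBound_and_eventually_near (h : IsNoise ν) (hc : IsNormLike c)
    (hγ0 : 0 ≤ γ) (hγ1 : γ < 1)
    (hU : ∀ α > 0, ∀ x y, c (U α x - U α y) ≤ γ * c (x - y)) (hU0 : ∀ α, U α 0 = 0)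
    (hG : ∀ x y, c (G x - G y) ≤ γ * c (x - y)) (hG0 : G 0 = 0)
    (hUG : ∀ R δ : ℝ, 0 < δ → ∀ᶠ α in 𝓝[>] 0, ∀ x, c x ≤ R → c (U α x - G x) ≤ δ)
    (hρ : ∀ᶠ α in 𝓝[>] 0, IsProbabilityMeasure (ρ α) ∧ Integrable (fun x => ‖x‖ ^ 2) (ρ α) ∧
      ((ρ α).prod ν).map (scaledStep (U α) α) = ρ α) :
    (∃ K, 0 ≤ K ∧ ∀ᶠ α in 𝓝[>] 0, LpBound 2 c (ρ α) id K) ∧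
      ∀ ζ > 0, ∀ᶠ τ in 𝓝[>] 0, ∀ᶠ α in 𝓝[>] 0,
        Near c (ρ α) (eulerLaw G τ (ρ α) (gaussianLimit ν τ)) (τ * ζ) := by
  have := h.isProbabilityMeasure
  obtain ⟨M, hM, hcM⟩ := hc.exists_le_norm
  obtain ⟨K, hK, hcoup⟩ := h.exists_coupling_four hc hγ0 hγ1
  obtain ⟨C, hC, hsum⟩ := h.exists_lpBound_sumLaw hc
  have hGm := (hc.continuous_of_lipschitz hG hγ0).measurable
  have hα01 : ∀ᶠ α : ℝ in 𝓝[>] 0, α ∈ Set.Ioc (0 : ℝ) 1 := Ioc_mem_nhdsGT one_pos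
  have hid : Tendsto (fun x : ℝ => x) (𝓝[>] 0) (𝓝 0) := nhdsWithin_le_nhds
  have hbound : ∀ᶠ α in 𝓝[>] 0, LpBound 2 c (ρ α) id K := by
    filter_upwards [hα01, hρ] with α hα hr
    exact lpBound_id_of_coupling hc hK (hcoup α hα.1 hα.2 (U α) (hU α hα.1) (hU0 α) (ρ α) hr.1
      hr.2.1 hr.2.2)
  refine ⟨⟨K, hK, hbound⟩, fun ζ hζ => ?_⟩
  have hτsmall : ∀ᶠ τ : ℝ in 𝓝[>] 0, 2 * (2 * K * τ + C * √τ) < ζ / 4 := by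
    have ht : Tendsto (fun τ : ℝ => 2 * (2 * K * τ + C * √τ)) (𝓝[>] 0)
        (𝓝 (2 * (2 * K * 0 + C * √0))) :=
      ((hid.const_mul _).add ((Real.continuous_sqrt.tendsto 0).comp hid |>.const_mul C)).const_mul 2
    refine ht.eventually_lt_const ?_
    simpa using by positivity
  filter_upwards [hτsmall, hα01] with τ hτ hτ01
  have hτ0 := hτ01.1
  have hαsmall : ∀ᶠ α : ℝ in 𝓝[>] 0, 2 * K * α < τ * ζ / 4 := by
    refine (hid.const_mul (2 * K)).eventually_lt_const ?_
    rw [mul_zero]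
    positivity
  set R := 16 * K ^ 2 / ζ + 1 with hR
  have hR0 : 0 < R := by positivity
  have hRζ : 2 / R * K ^ 2 ≤ ζ / 8 := by
    rw [div_mul_eq_mul_div, div_le_iff₀ hR0, hR]
    have : ζ / 8 * (16 * K ^ 2 / ζ + 1) = 2 * K ^ 2 + ζ / 8 := by
      field_simp
      ring
    linarith
  filter_upwards [hα01, hρ, hbound, hαsmall, hUG R (ζ / 8) (by positivity),
    h.eventually_near_gaussianLimit hτ0.le (η := τ * ζ / (4 * M)) (by positivity)]
    with α hα hr hb hα' hUGα hclt
  obtain ⟨_, hr2, hst⟩ := hr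
  have hα0 := hα.1
  have hUm := (hc.continuous_of_lipschitz (hU α hα0) hγ0).measurable
  have hdrift : LpBound 2 c (ρ α) (fun y => U α y - G y) (ζ / 8 + 2 / R * K ^ 2) := by
    refine lpBound_of_coupling hc hK (hcoup α hα0 hα.2 (U α) (hU α hα0) (hU0 α) (ρ α) ‹_›
      hr2 hst) two_pos (by positivity) hR0 (by fun_prop) (fun x y => ?_) (by simp [hU0, hG0]) hUGα
    have e : U α x - G x - (U α y - G y) = (U α x - U α y) - (G x - G y) := by abel
    rw [e]
    nlinarith [hc.sub_le (U α x - U α y) (G x - G y), hU α hα0 x y, hG x y, hc.nonneg (x - y)]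
  have hn : (⌊τ / α⌋₊ : ℝ) * α ≤ τ := by
    rw [← le_div_iff₀ hα0]
    exact Nat.floor_le (by positivity)
  have hn' : τ ≤ ⌊τ / α⌋₊ * α + α := by
    have := (Nat.lt_floor_add_one (τ / α)).le
    rw [div_le_iff₀ hα0] at this
    linarith
  have n1 := near_eulerLaw_of_stationary hc hγ0 hγ1 (hU α hα0) (hU0 α) hG hG0 hα0 hK
    (by positivity) (by positivity) hn hn' hst hb (hdrift.mono_bound (s := ζ / 4) (by linarith))
    (C := C * √τ) fun k hk => hsum α τ hα0 k (le_trans (by gcongr) hn)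
  have n2 := near_eulerLaw_eulerLaw (τ := τ) hc hGm hG hγ0 hτ0.le hτ01.2 le_rfl (by positivity)
    (Near.refl hc (ρ α)) (hclt.of_le_mul IsNormLike.of_norm hc hM.le hcM)
  have := isProbabilityMeasure_eulerLaw (ρ := ρ α) (σ := sumLaw ν (√α) ⌊τ / α⌋₊) (τ := τ) hGm
  refine (n1.trans hc n2 (by positivity) (by rw [mul_zero, zero_add]; positivity)).mono_bound ?_
  have e : M * (τ * ζ / (4 * M)) = τ * ζ / 4 := by field_simp
  rw [e]
  nlinarith [mul_le_mul_of_nonneg_left hτ.le hτ0.le]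

end Block

section Limit

variable {E : Type*} [NormedAddCommGroup E] [InnerProductSpace ℝ E] [FiniteDimensional ℝ E]
  [MeasurableSpace E] [BorelSpace E] {μ ν : Measure E} {c : E → ℝ}

lemma isTightMeasureSet_of_lpBound (hc : IsNormLike c) {K : ℝ} (hK : 0 ≤ K) :
    IsTightMeasureSet {μ : Measure E | LpBound 2 c μ id K} := by
  obtain ⟨M, hM, hcM⟩ := hc.exists_norm_le
  refine isTightMeasureSet_of_tendsto_measure_norm_gt ?_
  have ht : Tendsto (fun r : ℝ => ENNReal.ofReal ((M * K) ^ 2) / ENNReal.ofReal (r ^ 2)) atTop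
      (𝓝 0) := by
    have := ENNReal.Tendsto.const_div (a := ENNReal.ofReal ((M * K) ^ 2))
      (ENNReal.tendsto_ofReal_atTop.comp (tendsto_pow_atTop (α := ℝ) two_ne_zero))
      (Or.inr (by simp))
    rwa [ENNReal.div_top] at this
  refine tendsto_of_tendsto_of_tendsto_of_le_of_le' tendsto_const_nhds ht
    (Eventually.of_forall fun _ => zero_le) ?_
  filter_upwards [eventually_gt_atTop 0] with r hr
  refine iSup₂_le fun μ hμ => ?_
  have hμ' : LpBound 2 c μ id K := hμ
  rw [LpBound.two_iff_lintegral hc hK] at hμ'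
  have hm : Measurable fun x : E => ENNReal.ofReal (‖x‖ ^ 2) := by fun_prop
  calc μ {x | r < ‖x‖} ≤ μ {x | ENNReal.ofReal (r ^ 2) ≤ ENNReal.ofReal (‖x‖ ^ 2)} := by
        refine measure_mono fun x hx => ENNReal.ofReal_le_ofReal ?_
        exact pow_le_pow_left₀ hr.le (le_of_lt hx) 2
    _ ≤ (∫⁻ x, ENNReal.ofReal (‖x‖ ^ 2) ∂μ) / ENNReal.ofReal (r ^ 2) :=
        meas_ge_le_lintegral_div hm.aemeasurable (by simpa using by positivity) (by simp)
    _ ≤ _ := by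
        gcongr
        calc ∫⁻ x, ENNReal.ofReal (‖x‖ ^ 2) ∂μ
            ≤ ∫⁻ x, ENNReal.ofReal (M ^ 2) * ENNReal.ofReal (c (id x) ^ 2) ∂μ := by
              refine lintegral_mono fun x => ?_
              rw [← ENNReal.ofReal_mul (by positivity), ← mul_pow]
              exact ENNReal.ofReal_le_ofReal (pow_le_pow_left₀ (norm_nonneg _) (hcM _) 2)
          _ = ENNReal.ofReal (M ^ 2) * ∫⁻ x, ENNReal.ofReal (c (id x) ^ 2) ∂μ :=
              lintegral_const_mul' _ _ (by simp)
          _ ≤ ENNReal.ofReal (M ^ 2) * ENNReal.ofReal (K ^ 2) := by gcongr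
          _ = _ := by rw [← ENNReal.ofReal_mul (by positivity), mul_pow]

/-- Lower semicontinuity of the `L²` bound under weak convergence. -/
lemma LpBound.of_tendsto {Ω ι : Type*} [MeasurableSpace Ω] [TopologicalSpace Ω]
    [OpensMeasurableSpace Ω] {l : Filter ι} [l.NeBot] {P : ι → ProbabilityMeasure Ω}
    {Q : ProbabilityMeasure Ω} (h : Tendsto P l (𝓝 Q)) (hc : IsNormLike c) {X : Ω → E}
    (hX : Continuous X) {r : ℝ} (hr : 0 ≤ r)
    (hb : ∀ᶠ i in l, LpBound 2 c (P i : Measure Ω) X r) : LpBound 2 c (Q : Measure Ω) X r := by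
  simp only [LpBound.two_iff_lintegral hc hr] at hb ⊢
  have hcX : Continuous fun ω => c (X ω) ^ 2 := (hc.continuous.comp hX).pow 2
  rw [ProbabilityMeasure.tendsto_iff_forall_lintegral_tendsto] at h
  let F : ℕ → Ω → ℝ≥0 := fun N ω => min (Real.toNNReal (c (X ω) ^ 2)) N
  have hF : ∀ N, Continuous (F N) := fun N =>
    (continuous_real_toNNReal.comp hcX).min continuous_const
  have hbound : ∀ N, ∫⁻ ω, (F N ω : ℝ≥0∞) ∂(Q : Measure Ω) ≤ ENNReal.ofReal (r ^ 2) := by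
    intro N
    let f : BoundedContinuousFunction Ω ℝ≥0 := BoundedContinuousFunction.mkOfBound ⟨F N, hF N⟩ N
      fun x y => by
        rw [NNReal.dist_eq]
        have h1 : (F N x : ℝ) ≤ N := by exact_mod_cast min_le_right _ _
        have h2 : (F N y : ℝ) ≤ N := by exact_mod_cast min_le_right _ _
        change |(F N x : ℝ) - F N y| ≤ N
        rw [abs_le]
        constructor <;> linarith [(F N x).2, (F N y).2]
    refine le_of_tendsto (h f) (hb.mono fun i hi => le_trans (lintegral_mono fun ω => ?_) hi)
    exact ENNReal.coe_le_coe.2 (min_le_left _ _)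
  have hsup : ∀ ω, ENNReal.ofReal (c (X ω) ^ 2) = ⨆ N, (F N ω : ℝ≥0∞) := by
    intro ω
    refine le_antisymm ?_ (iSup_le fun N => ENNReal.coe_le_coe.2 (min_le_left _ _))
    obtain ⟨N, hN⟩ := exists_nat_ge (Real.toNNReal (c (X ω) ^ 2))
    refine le_iSup_of_le N (ENNReal.coe_le_coe.2 ?_)
    exact le_min le_rfl hN
  simp only [hsup]
  rw [lintegral_iSup (fun N => (hF N).measurable.coe_nnreal_ennreal) ?_]
  · exact iSup_le hbound
  · intro N N' hN ω
    exact ENNReal.coe_le_coe.2 (min_le_min le_rfl (by exact_mod_cast hN))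

lemma exists_tendsto_of_isTight {F ι : Type*} [MeasurableSpace F] [TopologicalSpace F] [T2Space F]
    [BorelSpace F] [NormalSpace F] {S : Set (Measure F)}
    (hS : IsTightMeasureSet S) (u : Ultrafilter ι) (p : ι → ProbabilityMeasure F)
    (h : ∀ᶠ i in u, (p i : Measure F) ∈ S) : ∃ q, Tendsto p u (𝓝 q) := by
  have hcomp : IsCompact (closure {q : ProbabilityMeasure F | (q : Measure F) ∈ S}) := by
    refine isCompact_closure_of_isTightMeasureSet (hS.subset ?_)
    rintro _ ⟨q, hq, rfl⟩
    exact hq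
  obtain ⟨q, -, hq⟩ := hcomp.ultrafilter_le_nhds (u.map p) (by
    rw [le_principal_iff]
    exact h.mono fun i hi => subset_closure hi)
  exact ⟨q, hq⟩

/-- A Cauchy family with bounded second moments converges in the transport distance. -/
theorem exists_limit_of_cauchy {l : Filter ℝ} [l.NeBot] {ρ : ℝ → Measure E} (hc : IsNormLike c)
    {K : ℝ} (hK : 0 ≤ K) (hρ : ∀ᶠ α in l, IsProbabilityMeasure (ρ α) ∧ LpBound 2 c (ρ α) id K)
    (h : ∀ η > 0, ∀ᶠ p in l ×ˢ l, Near c (ρ p.1) (ρ p.2) η) :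
    ∃ ν : Measure E, IsProbabilityMeasure ν ∧ LpBound 2 c ν id K ∧
      ∀ η > 0, ∀ᶠ α in l, Near c (ρ α) ν η := by
  have hT := isTightMeasureSet_of_lpBound hc hK
  let u : Ultrafilter ℝ := Ultrafilter.of l
  have hu : (u : Filter ℝ) ≤ l := Ultrafilter.of_le l
  have : Nonempty (ProbabilityMeasure E) := ⟨⟨Measure.dirac 0, inferInstance⟩⟩
  obtain ⟨p, hp⟩ : ∃ p : ℝ → ProbabilityMeasure E, ∀ᶠ α in l, (p α : Measure E) = ρ α :=
    Eventually.choice (r := fun α (q : ProbabilityMeasure E) => (q : Measure E) = ρ α)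
      (hρ.mono fun α hα => ⟨⟨ρ α, hα.1⟩, rfl⟩)
  have hpK : ∀ᶠ α in u, LpBound 2 c (p α : Measure E) id K := by
    filter_upwards [hp.filter_mono hu, hρ.filter_mono hu] with α h1 h2
    rw [h1]
    exact h2.2
  obtain ⟨ν, hν⟩ := exists_tendsto_of_isTight hT u p hpK
  refine ⟨ν, inferInstance, LpBound.of_tendsto hν hc continuous_id hK hpK, fun η hη => ?_⟩
  filter_upwards [(h η hη).curry, hρ] with α hα hαρ
  obtain ⟨_, hαK⟩ := hαρ
  have : Nonempty (ProbabilityMeasure (E × E)) := ⟨⟨Measure.dirac 0, inferInstance⟩⟩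
  obtain ⟨π, hπ⟩ : ∃ π : ℝ → ProbabilityMeasure (E × E), ∀ᶠ β in u,
      IsCoupling (π β : Measure (E × E)) (ρ α) (ρ β) ∧
        LpBound 2 c (π β : Measure (E × E)) (fun p => p.1 - p.2) η := by
    refine Eventually.choice (r := fun β (q : ProbabilityMeasure (E × E)) =>
      IsCoupling (q : Measure (E × E)) (ρ α) (ρ β) ∧
        LpBound 2 c (q : Measure (E × E)) (fun p => p.1 - p.2) η)
      ((hα.filter_mono hu).mono fun β hβ => ?_)
    obtain ⟨π, h1, h2⟩ := hβ
    exact ⟨⟨π, h1.isProbabilityMeasure⟩, h1, h2⟩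
  have hT2 : IsTightMeasureSet {π : Measure (E × E) | LpBound 2 c π.fst id K ∧
      LpBound 2 c π.snd id K} := by
    refine IsTightMeasureSet.prodMk (hT.subset ?_) (hT.subset ?_)
    · rintro _ ⟨π, hπ, rfl⟩
      exact hπ.1
    · rintro _ ⟨π, hπ, rfl⟩
      exact hπ.2
  obtain ⟨Q, hQ⟩ := exists_tendsto_of_isTight hT2 u π (by
    filter_upwards [hπ, hρ.filter_mono hu] with β h1 h2
    refine ⟨?_, ?_⟩
    · rw [Measure.fst, h1.1.1]
      exact hαK
    · rw [Measure.snd, h1.1.2]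
      exact h2.2)
  refine ⟨Q, ⟨?_, ?_⟩, LpBound.of_tendsto hQ hc (by fun_prop) hη.le (hπ.mono fun β hβ => hβ.2)⟩
  · have h1 := ProbabilityMeasure.tendsto_map_of_tendsto_of_continuous _ _ hQ continuous_fst
    have h2 : Tendsto (fun β => (π β).map (f := Prod.fst) continuous_fst.measurable.aemeasurable) u
        (𝓝 (⟨ρ α, ‹_›⟩ : ProbabilityMeasure E)) := by
      refine tendsto_const_nhds.congr' (hπ.mono fun β hβ => ?_)
      exact Subtype.ext hβ.1.1.symm
    have h3 := tendsto_nhds_unique h1 h2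
    exact congrArg (fun q : ProbabilityMeasure E => (q : Measure E)) h3
  · have h1 := ProbabilityMeasure.tendsto_map_of_tendsto_of_continuous _ _ hQ continuous_snd
    have h2 : Tendsto (fun β => (π β).map (f := Prod.snd) continuous_snd.measurable.aemeasurable) u
        (𝓝 ν) := by
      refine hν.congr' ?_
      filter_upwards [hπ, hp.filter_mono hu] with β hβ hβ'
      refine Subtype.ext ?_
      exact Eq.trans hβ' hβ.1.2.symm
    have h3 := tendsto_nhds_unique h1 h2
    exact congrArg (fun q : ProbabilityMeasure E => (q : Measure E)) h3

lemma Near.norm_integral_sub_le {V : Type*} [NormedAddCommGroup V] [NormedSpace ℝ V]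
    [IsProbabilityMeasure μ] (hc : IsNormLike c) {M r t : ℝ}
    (hM : 0 ≤ M) (hcM : ∀ x, ‖x‖ ≤ M * c x) (hr : 0 ≤ r) (h : Near c μ ν r) {f : E → V}
    (ht : 0 ≤ t) (hfb : ∀ x y, ‖f x - f y‖ ≤ t * ‖x - y‖)
    (hμ : Integrable f μ) (hν : Integrable f ν) :
    ‖∫ x, f x ∂μ - ∫ x, f x ∂ν‖ ≤ t * (M * r) := by
  obtain ⟨π, h1, h2⟩ := h
  have := h1.isProbabilityMeasure
  have hcm := hc.continuous.measurable
  have i1 : Integrable (fun p : E × E => f p.1) π := by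
    rw [← h1.1] at hμ
    exact hμ.comp_measurable measurable_fst
  have i2 : Integrable (fun p : E × E => f p.2) π := by
    rw [← h1.2] at hν
    exact hν.comp_measurable measurable_snd
  have e1 : ∫ x, f x ∂μ = ∫ p, f p.1 ∂π := by
    conv_lhs => rw [← h1.1]
    refine integral_map measurable_fst.aemeasurable ?_
    rw [h1.1]
    exact hμ.1
  have e2 : ∫ x, f x ∂ν = ∫ p, f p.2 ∂π := by
    conv_lhs => rw [← h1.2]
    refine integral_map measurable_snd.aemeasurable ?_
    rw [h1.2]
    exact hν.1
  rw [e1, e2, ← integral_sub i1 i2]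
  refine (norm_integral_le_lintegral_norm _).trans
    (ENNReal.toReal_le_of_le_ofReal (by positivity) ?_)
  calc ∫⁻ p, ENNReal.ofReal ‖f p.1 - f p.2‖ ∂π
      ≤ ∫⁻ p : E × E, ENNReal.ofReal (t * M) * ‖c (p.1 - p.2)‖ₑ ∂π := by
        refine lintegral_mono fun p => ?_
        rw [Real.enorm_of_nonneg (hc.nonneg _), ← ENNReal.ofReal_mul (by positivity), mul_assoc]
        refine ENNReal.ofReal_le_ofReal ((hfb _ _).trans ?_)
        gcongr
        exact hcM _
    _ = ENNReal.ofReal (t * M) * eLpNorm (fun p : E × E => c (p.1 - p.2)) 1 π := by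
        rw [lintegral_const_mul' _ _ (by simp), eLpNorm_one_eq_lintegral_enorm]
    _ ≤ ENNReal.ofReal (t * M) * ENNReal.ofReal r := by
        gcongr
        refine le_trans (eLpNorm_le_eLpNorm_of_exponent_le (by norm_num) ?_) h2
        exact Measurable.aestronglyMeasurable (by fun_prop)
    _ = ENNReal.ofReal (t * (M * r)) := by rw [← ENNReal.ofReal_mul (by positivity), mul_assoc]

lemma Near.eq_of_forall [IsProbabilityMeasure μ] [IsProbabilityMeasure ν] (hc : IsNormLike c)
    (h : ∀ η > 0, Near c μ ν η) : μ = ν := by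
  obtain ⟨M, hM, hcM⟩ := hc.exists_norm_le
  refine Measure.ext_of_charFun (funext fun t => ?_)
  have hint : ∀ (κ : Measure E) [IsProbabilityMeasure κ],
      Integrable (fun x : E => Complex.exp (inner ℝ x t * Complex.I)) κ := by
    intro κ _
    refine Integrable.of_bound (C := 1) (Continuous.aestronglyMeasurable (by fun_prop))
      (ae_of_all _ fun x => ?_)
    rw [Complex.norm_exp_ofReal_mul_I]
  have hlip : ∀ x y : E, ‖Complex.exp (inner ℝ x t * Complex.I)
      - Complex.exp (inner ℝ y t * Complex.I)‖ ≤ ‖t‖ * ‖x - y‖ := by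
    intro x y
    have e : Complex.exp (inner ℝ x t * Complex.I) - Complex.exp (inner ℝ y t * Complex.I)
        = Complex.exp (inner ℝ y t * Complex.I)
          * (Complex.exp (Complex.I * (inner ℝ (x - y) t : ℝ)) - 1) := by
      rw [mul_sub, ← Complex.exp_add, mul_one, inner_sub_left]
      push_cast
      ring_nf
    rw [e, norm_mul, Complex.norm_exp_ofReal_mul_I, one_mul, mul_comm ‖t‖]
    exact (Real.norm_exp_I_mul_ofReal_sub_one_le).trans (norm_inner_le_norm _ _)
  have hle : ∀ η > 0, ‖charFun μ t - charFun ν t‖ ≤ ‖t‖ * (M * η) := fun η hη => by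
    rw [charFun_apply, charFun_apply]
    exact (h η hη).norm_integral_sub_le hc hM.le hcM hη.le (norm_nonneg t) hlip (hint μ) (hint ν)
  have ht : Tendsto (fun η : ℝ => ‖t‖ * (M * η)) (𝓝[>] 0) (𝓝 (‖t‖ * (M * 0))) :=
    (((continuous_id.tendsto (0 : ℝ)).const_mul M).const_mul ‖t‖).mono_left nhdsWithin_le_nhds
  rw [mul_zero, mul_zero] at ht
  have h0 : ‖charFun μ t - charFun ν t‖ ≤ 0 :=
    ge_of_tendsto ht (eventually_mem_nhdsWithin.mono fun η hη => hle η hη)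
  exact sub_eq_zero.1 (norm_le_zero_iff.1 h0)

end Limit

section Scaling

variable {d m : ℕ} {γ : ℝ} {c : EuclideanSpace ℝ (Fin d) → ℝ}
  {T : EuclideanSpace ℝ (Fin d) → EuclideanSpace ℝ (Fin d)} {θ : EuclideanSpace ℝ (Fin d)}
  {g : EuclideanSpace ℝ (Fin m) → EuclideanSpace ℝ (Fin d)}
  {F : EuclideanSpace ℝ (Fin d) → EuclideanSpace ℝ (Fin m)} {ε : ℝ}
  {ν μ : Measure (EuclideanSpace ℝ (Fin d))}

/-- The operator `T` centred at `θ` and rescaled by `√α`. -/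
def scaledOp {E : Type*} [AddCommGroup E] [Module ℝ E] (T : E → E) (θ : E) (α : ℝ) (y : E) : E :=
  (√α)⁻¹ • (T (θ + √α • y) - θ)

lemma scaledOp_contraction (hc : IsNormLike c) (hT : ∀ x y, c (T x - T y) ≤ γ * c (x - y))
    {α : ℝ} (hα : 0 < α) (x y : EuclideanSpace ℝ (Fin d)) :
    c (scaledOp T θ α x - scaledOp T θ α y) ≤ γ * c (x - y) := by
  have hs : 0 < √α := Real.sqrt_pos.2 hα
  have h1 : scaledOp T θ α x - scaledOp T θ α y
      = (√α)⁻¹ • (T (θ + √α • x) - T (θ + √α • y)) := by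
    rw [scaledOp, scaledOp, ← smul_sub, sub_sub_sub_cancel_right]
  have h2 : θ + √α • x - (θ + √α • y) = √α • (x - y) := by
    rw [smul_sub]; abel
  have h3 := hT (θ + √α • x) (θ + √α • y)
  rw [h2, hc.smul_of_nonneg hs.le] at h3
  rw [h1, hc.smul_of_nonneg (inv_nonneg.2 hs.le)]
  calc (√α)⁻¹ * c (T (θ + √α • x) - T (θ + √α • y))
      ≤ (√α)⁻¹ * (γ * (√α * c (x - y))) := by gcongr
    _ = γ * c (x - y) := by field_simp

lemma scaledOp_zero (hfix : T θ = θ) (α : ℝ) : scaledOp T θ α 0 = 0 := by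
  simp [scaledOp, hfix]

/-- The rescaled operators converge to `g ∘ ∇F(0)` uniformly on bounded sets. -/
lemma eventually_scaledOp_sub_le (hc : IsNormLike c) (hε : 0 < ε) (hg : Continuous g)
    (hghom : ∀ r : ℝ, 0 ≤ r → ∀ x, g (r • x) = r • g x) (hF0 : F 0 = 0)
    (hF : DifferentiableAt ℝ F 0)
    (hdecomp : ∀ x ∈ Metric.ball θ ε, T x = θ + g (F (x - θ))) (R : ℝ) {δ : ℝ} (hδ : 0 < δ) :
    ∀ᶠ α in 𝓝[>] 0, ∀ x, c x ≤ R → c (scaledOp T θ α x - g (fderiv ℝ F 0 x)) ≤ δ := by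
  obtain ⟨K, hK, hcK⟩ := hc.exists_le_norm
  obtain ⟨M, hM, hcM⟩ := hc.exists_norm_le
  let r : ℝ := M * |R| + 1
  have hr : 0 < r := by positivity
  have hxr : ∀ x, c x ≤ R → ‖x‖ < r := fun x hx =>
    lt_of_le_of_lt ((hcM x).trans (mul_le_mul_of_nonneg_left (hx.trans (le_abs_self R)) hM.le))
      (lt_add_one _)
  let A := fderiv ℝ F 0
  let S : ℝ := ‖A‖ * r + 1
  obtain ⟨η, hη, hgη⟩ := Metric.uniformContinuousOn_iff.1
    ((isCompact_closedBall (0 : EuclideanSpace ℝ (Fin m)) S).uniformContinuousOn_of_continuous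
      hg.continuousOn) (δ / K) (by positivity)
  let e : ℝ := min (η / (2 * r)) (1 / r)
  have he : 0 < e := by positivity
  have hlin : ∀ᶠ y in 𝓝 (0 : EuclideanSpace ℝ (Fin d)), ‖F y - A y‖ ≤ e * ‖y‖ := by
    simpa [hF0] using (hasFDerivAt_iff_isLittleO.1 hF.hasFDerivAt).def he
  obtain ⟨κ, hκ, hball⟩ := Metric.eventually_nhds_iff.1 hlin
  have hsq : Tendsto (fun α : ℝ => √α * r) (𝓝[>] 0) (𝓝 0) := by
    have : Tendsto (fun α : ℝ => √α * r) (𝓝 0) (𝓝 (√0 * r)) :=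
      (Real.continuous_sqrt.mul continuous_const).tendsto 0
    rw [Real.sqrt_zero, zero_mul] at this
    exact this.mono_left nhdsWithin_le_nhds
  filter_upwards [hsq.eventually_lt_const hε, hsq.eventually_lt_const hκ, self_mem_nhdsWithin]
    with α h1 h2 h3 x hx
  have hs : 0 < √α := Real.sqrt_pos.2 h3
  have hnx := hxr x hx
  have hn : ‖√α • x‖ < √α * r := by
    rw [norm_smul, Real.norm_of_nonneg hs.le]
    gcongr
  have hmem : θ + √α • x ∈ Metric.ball θ ε := by
    rw [Metric.mem_ball, dist_eq_norm, add_sub_cancel_left]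
    exact hn.trans h1
  have hU : scaledOp T θ α x = g ((√α)⁻¹ • F (√α • x)) := by
    rw [scaledOp, hdecomp _ hmem, add_sub_cancel_left, add_sub_cancel_left,
      hghom _ (inv_nonneg.2 hs.le)]
  have hd : ‖(√α)⁻¹ • F (√α • x) - A x‖ ≤ e * ‖x‖ := by
    have h4 := hball (y := √α • x) (by rw [dist_zero_right]; exact hn.trans h2)
    have h5 : (√α)⁻¹ • F (√α • x) - A x = (√α)⁻¹ • (F (√α • x) - A (√α • x)) := by
      rw [map_smul, smul_sub, smul_smul, inv_mul_cancel₀ hs.ne', one_smul]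
    rw [h5, norm_smul, Real.norm_of_nonneg (inv_nonneg.2 hs.le)]
    rw [norm_smul, Real.norm_of_nonneg hs.le] at h4
    calc (√α)⁻¹ * ‖F (√α • x) - A (√α • x)‖ ≤ (√α)⁻¹ * (e * (√α * ‖x‖)) := by gcongr
      _ = e * ‖x‖ := by field_simp
  have her : e * ‖x‖ ≤ e * r := by gcongr
  have he1 : e * r ≤ 1 := by
    calc e * r ≤ 1 / r * r := by gcongr; exact min_le_right _ _
      _ = 1 := by field_simp
  have he2 : e * r < η := by
    calc e * r ≤ η / (2 * r) * r := by gcongr; exact min_le_left _ _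
      _ = η / 2 := by field_simp
      _ < η := by linarith
  have hAx : ‖A x‖ ≤ ‖A‖ * r := (A.le_opNorm x).trans (by gcongr)
  have hm1 : A x ∈ Metric.closedBall (0 : EuclideanSpace ℝ (Fin m)) S := by
    rw [mem_closedBall_zero_iff]
    linarith
  have hm2 : (√α)⁻¹ • F (√α • x) ∈ Metric.closedBall (0 : EuclideanSpace ℝ (Fin m)) S := by
    rw [mem_closedBall_zero_iff]
    have := norm_le_norm_add_norm_sub (A x) ((√α)⁻¹ • F (√α • x))
    rw [norm_sub_rev] at this
    linarith
  have h6 := hgη _ hm2 _ hm1 (by rw [dist_eq_norm]; linarith)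
  rw [dist_eq_norm] at h6
  rw [hU]
  refine (hcK _).trans ?_
  rw [lt_div_iff₀ hK] at h6
  rw [mul_comm]
  exact h6.le

lemma contraction_of_eventually_le {U : ℝ → EuclideanSpace ℝ (Fin d) → EuclideanSpace ℝ (Fin d)}
    {G : EuclideanSpace ℝ (Fin d) → EuclideanSpace ℝ (Fin d)} (hc : IsNormLike c)
    (hU : ∀ α > 0, ∀ x y, c (U α x - U α y) ≤ γ * c (x - y))
    (hUG : ∀ R δ : ℝ, 0 < δ → ∀ᶠ α in 𝓝[>] 0, ∀ x, c x ≤ R → c (U α x - G x) ≤ δ)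
    (x y : EuclideanSpace ℝ (Fin d)) : c (G x - G y) ≤ γ * c (x - y) := by
  refine le_of_forall_pos_le_add fun δ hδ => ?_
  obtain ⟨α, hα, hα0⟩ := ((hUG (max (c x) (c y)) (δ / 2) (by positivity)).and
    self_mem_nhdsWithin).exists
  have h1 := hα x (le_max_left _ _)
  have h2 := hα y (le_max_right _ _)
  rw [hc.map_sub_rev] at h1
  have h3 := hU α hα0 x y
  have h4 : G x - G y = (G x - U α x) + ((U α x - U α y) + (U α y - G y)) := by abel
  rw [h4]
  have h5 := hc.add_le (G x - U α x) ((U α x - U α y) + (U α y - G y))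
  have h6 := hc.add_le (U α x - U α y) (U α y - G y)
  linarith

lemma map_scaledStep_of_stationary [IsProbabilityMeasure ν] [IsProbabilityMeasure μ]
    (hT : Continuous T) {α : ℝ} (hα : 0 < α) (h : saStep T α ν μ = μ) :
    ((μ.map fun x => (√α)⁻¹ • (x - θ)).prod ν).map (scaledStep (scaledOp T θ α) α)
      = μ.map fun x => (√α)⁻¹ • (x - θ) := by
  have hs : 0 < √α := Real.sqrt_pos.2 hα
  have hf : Measurable fun x : EuclideanSpace ℝ (Fin d) => (√α)⁻¹ • (x - θ) := by fun_prop
  have hU : Continuous (scaledOp T θ α) := by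
    unfold scaledOp
    fun_prop
  have hm := measurable_scaledStep hU α
  have hst : Measurable fun p : EuclideanSpace ℝ (Fin d) × EuclideanSpace ℝ (Fin d) =>
      p.1 + α • (T p.1 - p.1 + p.2) := by
    have : Continuous fun p : EuclideanSpace ℝ (Fin d) × EuclideanSpace ℝ (Fin d) =>
      p.1 + α • (T p.1 - p.1 + p.2) := by fun_prop
    exact this.measurable
  have h1 : (μ.map fun x => (√α)⁻¹ • (x - θ)).prod ν
      = (μ.prod ν).map (Prod.map (fun x => (√α)⁻¹ • (x - θ)) id) := by
    rw [← Measure.map_prod_map μ ν hf measurable_id, Measure.map_id]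
  conv_rhs => rw [← h, saStep, Measure.map_map hf hst]
  rw [h1, Measure.map_map hm (hf.prodMap measurable_id)]
  congr 1
  funext ⟨x, w⟩
  have h2 : θ + √α • ((√α)⁻¹ • (x - θ)) = x := by
    rw [smul_smul, mul_inv_cancel₀ hs.ne', one_smul, add_sub_cancel]
  have h3 : √α = (√α)⁻¹ * α := by
    rw [inv_mul_eq_div, Real.div_sqrt]
  simp only [Function.comp_apply, Prod.map_apply, id_eq, scaledStep, scaledOp, h2]
  have h4 : √α • w = ((√α)⁻¹ * α) • w := by rw [← h3]
  rw [h4]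
  module

end Scaling

section Integrability

variable {d : ℕ} {c : EuclideanSpace ℝ (Fin d) → ℝ} {μ ν : Measure (EuclideanSpace ℝ (Fin d))}

lemma integrable_norm_sq_of_lpBound (hc : IsNormLike c) {K : ℝ} (hK : 0 ≤ K)
    (h : LpBound 2 c μ id K) : Integrable (fun x => ‖x‖ ^ 2) μ := by
  obtain ⟨M, hM, hcM⟩ := hc.exists_norm_le
  rw [LpBound.two_iff_lintegral hc hK] at h
  have hm : AEStronglyMeasurable (fun x => c x ^ 2) μ :=
    (hc.continuous.pow 2).aestronglyMeasurable
  have hi : Integrable (fun x => c x ^ 2) μ :=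
    (lintegral_ofReal_ne_top_iff_integrable hm (ae_of_all _ fun x => sq_nonneg _)).1
      (h.trans_lt ENNReal.ofReal_lt_top).ne
  refine (hi.const_mul (M ^ 2)).mono' (continuous_norm.pow 2).aestronglyMeasurable
    (ae_of_all _ fun x => ?_)
  rw [Real.norm_of_nonneg (by positivity), ← mul_pow]
  exact pow_le_pow_left₀ (norm_nonneg _) (hcM x) 2

lemma exists_lpBound_of_integrable (hc : IsNormLike c)
    (h : Integrable (fun x => ‖x‖ ^ 2) μ) : ∃ K, 0 ≤ K ∧ LpBound 2 c μ id K := by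
  obtain ⟨M, hM, hcM⟩ := hc.exists_le_norm
  refine ⟨M * √(∫ x, ‖x‖ ^ 2 ∂μ), by positivity, ?_⟩
  rw [LpBound.two_iff_lintegral hc (by positivity), mul_pow, Real.sq_sqrt
    (integral_nonneg fun _ => by positivity), ← integral_const_mul,
    ofReal_integral_eq_lintegral_ofReal (h.const_mul _) (ae_of_all _ fun _ => by positivity)]
  refine lintegral_mono fun x => ENNReal.ofReal_le_ofReal ?_
  rw [← mul_pow]
  exact pow_le_pow_left₀ (hc.nonneg _) (hcM _) 2

lemma integrable_id_of_norm_sq [IsProbabilityMeasure μ] (h : Integrable (fun x => ‖x‖ ^ 2) μ) :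
    Integrable (fun x => x) μ := by
  refine ((integrable_const (1 : ℝ)).add h).mono' continuous_id.aestronglyMeasurable
    (ae_of_all _ fun x => ?_)
  simp only [Pi.add_apply]
  nlinarith [sq_nonneg (‖x‖ - 1)]

lemma integrable_norm_sq_map (θ : EuclideanSpace ℝ (Fin d)) (a : ℝ) [IsProbabilityMeasure μ]
    (h : Integrable (fun x => ‖x‖ ^ 2) μ) :
    Integrable (fun x => ‖x‖ ^ 2) (μ.map fun x => a • (x - θ)) := by
  have hf : Measurable fun x : EuclideanSpace ℝ (Fin d) => a • (x - θ) := by fun_prop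
  have hn : Continuous fun x : EuclideanSpace ℝ (Fin d) => ‖x‖ ^ 2 := continuous_norm.pow 2
  rw [integrable_map_measure hn.aestronglyMeasurable hf.aemeasurable]
  refine (((h.add (integrable_const (‖θ‖ ^ 2))).const_mul (2 * a ^ 2))).mono'
    (Measurable.aestronglyMeasurable (by fun_prop)) (ae_of_all _ fun x => ?_)
  simp only [Function.comp_apply, Pi.add_apply]
  rw [Real.norm_of_nonneg (by positivity), norm_smul, mul_pow, Real.norm_eq_abs, sq_abs]
  have h1 := norm_sub_le x θ
  have h2 : ‖x - θ‖ ^ 2 ≤ 2 * (‖x‖ ^ 2 + ‖θ‖ ^ 2) := by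
    nlinarith [sq_nonneg (‖x‖ - ‖θ‖), norm_nonneg (x - θ)]
  nlinarith [sq_nonneg a]

lemma tendsto_w2dist_of_near {l : Filter ℝ} {ρ : ℝ → Measure (EuclideanSpace ℝ (Fin d))}
    (hc : IsNormLike c) (hρ : ∀ᶠ α in l, IsProbabilityMeasure (ρ α))
    (h : ∀ η > 0, ∀ᶠ α in l, Near c (ρ α) ν η) :
    Tendsto (fun α => W2dist c (ρ α) ν) l (𝓝 0) := by
  refine (tendsto_order.2 ⟨fun a ha => Eventually.of_forall fun α => ?_, fun a ha => ?_⟩)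
  · exact ha.trans_le (Real.sqrt_nonneg _)
  · filter_upwards [hρ, h (a / 2) (by positivity)] with α _ hα
    exact (hα.w2dist_le hc (by positivity)).trans_lt (by linarith)

end Integrability

theorem stmt_6 {d m : ℕ} (γ : ℝ) (hγ : γ ∈ Set.Ioo (0:ℝ) 1)
    (c : EuclideanSpace ℝ (Fin d) → ℝ) (hc : IsNormLike c)
    (T : EuclideanSpace ℝ (Fin d) → EuclideanSpace ℝ (Fin d))
    (hT : ∀ θ θ', c (T θ - T θ') ≤ γ * c (θ - θ'))
    (θstar : EuclideanSpace ℝ (Fin d)) (hfix : T θstar = θstar)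
    -- g∘F decomposability of T at θstar
    (g : EuclideanSpace ℝ (Fin m) → EuclideanSpace ℝ (Fin d))
    (F : EuclideanSpace ℝ (Fin d) → EuclideanSpace ℝ (Fin m))
    (ε : ℝ) (hε : 0 < ε)
    (hgcont : Continuous g)
    (hghom : ∀ r : ℝ, 0 ≤ r → ∀ x, g (r • x) = r • g x)
    (hF0 : F 0 = 0)
    (hFdiff : ∀ x ∈ Metric.ball (0 : EuclideanSpace ℝ (Fin d)) ε, DifferentiableAt ℝ F x)
    (hFderiv : ContinuousAt (fderiv ℝ F) 0)
    (hdecomp : ∀ θ ∈ Metric.ball θstar ε, T θ = θstar + g (F (θ - θstar)))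
    -- i.i.d. zero-mean noise with finite fourth moment, given by its law νw
    (νw : Measure (EuclideanSpace ℝ (Fin d))) [IsProbabilityMeasure νw]
    (hνint : Integrable (fun x : EuclideanSpace ℝ (Fin d) => x) νw)
    (hνmean : ∫ x, x ∂νw = 0)
    (hν4 : Integrable (fun x : EuclideanSpace ℝ (Fin d) => ‖x‖ ^ 4) νw)
    -- the stationary distributions μ α for small α
    (α₁ : ℝ) (hα₁ : 0 < α₁) (μ : ℝ → Measure (EuclideanSpace ℝ (Fin d)))
    (hμ : ∀ α ∈ Set.Ioc (0:ℝ) α₁, IsProbabilityMeasure (μ α) ∧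
      Integrable (fun x : EuclideanSpace ℝ (Fin d) => ‖x‖ ^ 2) (μ α) ∧
      saStep T α νw (μ α) = μ α) :
    ∃ ν : Measure (EuclideanSpace ℝ (Fin d)),
      (IsProbabilityMeasure ν ∧ Integrable (fun x : EuclideanSpace ℝ (Fin d) => ‖x‖ ^ 2) ν ∧
        Tendsto (fun α : ℝ =>
            W2dist c (Measure.map (fun x => (Real.sqrt α)⁻¹ • (x - θstar)) (μ α)) ν)
          (𝓝[>] 0) (𝓝 0)) ∧
      (∀ ν' : Measure (EuclideanSpace ℝ (Fin d)),
        IsProbabilityMeasure ν' → Integrable (fun x : EuclideanSpace ℝ (Fin d) => ‖x‖ ^ 2) ν' →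
        Tendsto (fun α : ℝ =>
            W2dist c (Measure.map (fun x => (Real.sqrt α)⁻¹ • (x - θstar)) (μ α)) ν')
          (𝓝[>] 0) (𝓝 0) → ν' = ν) ∧
      -- universality: the limit depends on the noise law only through T and Var(w₀)
      (∀ νw' : Measure (EuclideanSpace ℝ (Fin d)), IsProbabilityMeasure νw' →
        Integrable (fun x : EuclideanSpace ℝ (Fin d) => x) νw' → (∫ x, x ∂νw' = 0) →
        Integrable (fun x : EuclideanSpace ℝ (Fin d) => ‖x‖ ^ 4) νw' →
        (∀ z : EuclideanSpace ℝ (Fin d),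
          ∫ x, (@inner ℝ _ _ z x) ^ 2 ∂νw' = ∫ x, (@inner ℝ _ _ z x) ^ 2 ∂νw) →
        ∀ α₁' : ℝ, 0 < α₁' → ∀ μ' : ℝ → Measure (EuclideanSpace ℝ (Fin d)),
          (∀ α ∈ Set.Ioc (0:ℝ) α₁', IsProbabilityMeasure (μ' α) ∧
            Integrable (fun x : EuclideanSpace ℝ (Fin d) => ‖x‖ ^ 2) (μ' α) ∧
            saStep T α νw' (μ' α) = μ' α) →
          Tendsto (fun α : ℝ =>
              W2dist c (Measure.map (fun x => (Real.sqrt α)⁻¹ • (x - θstar)) (μ' α)) ν)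
            (𝓝[>] 0) (𝓝 0)) ∧
      -- bias expansion:  mean of μ_α = θ* + √α ∫ y dν + o(√α)
      Tendsto (fun α : ℝ =>
          (Real.sqrt α)⁻¹ * ‖(∫ x, x ∂(μ α)) - θstar - Real.sqrt α • (∫ y, y ∂ν)‖)
        (𝓝[>] 0) (𝓝 0) := by
  obtain ⟨hγ0, hγ1⟩ := hγ
  have hTc : Continuous T := hc.continuous_of_lipschitz hT hγ0.le
  obtain ⟨M, hM, hcM⟩ := hc.exists_norm_le
  let G : EuclideanSpace ℝ (Fin d) → EuclideanSpace ℝ (Fin d) := fun x => g (fderiv ℝ F 0 x)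
  let sc : (ℝ → Measure (EuclideanSpace ℝ (Fin d))) → ℝ → Measure (EuclideanSpace ℝ (Fin d)) :=
    fun μ α => (μ α).map fun x => (√α)⁻¹ • (x - θstar)
  have hU : ∀ α > 0, ∀ x y, c (scaledOp T θstar α x - scaledOp T θstar α y) ≤ γ * c (x - y) :=
    fun α hα => scaledOp_contraction hc hT hα
  have hUG : ∀ R δ : ℝ, 0 < δ → ∀ᶠ α in 𝓝[>] 0, ∀ x, c x ≤ R →
      c (scaledOp T θstar α x - G x) ≤ δ := fun R δ hδ =>
    eventually_scaledOp_sub_le hc hε hgcont hghom hF0 (hFdiff 0 (Metric.mem_ball_self hε))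
      hdecomp R hδ
  have hG := contraction_of_eventually_le hc hU hUG
  have hG0 : G 0 = 0 := by
    have := hghom 0 le_rfl 0
    simpa [G] using this
  have hstat : ∀ (κ : Measure (EuclideanSpace ℝ (Fin d))), IsNoise κ → ∀ a > 0,
      ∀ η : ℝ → Measure (EuclideanSpace ℝ (Fin d)), (∀ α ∈ Set.Ioc (0 : ℝ) a,
        IsProbabilityMeasure (η α) ∧
        Integrable (fun x : EuclideanSpace ℝ (Fin d) => ‖x‖ ^ 2) (η α) ∧
        saStep T α κ (η α) = η α) →
      ∀ᶠ α in 𝓝[>] 0, IsProbabilityMeasure (sc η α) ∧ Integrable (fun x => ‖x‖ ^ 2) (sc η α) ∧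
        ((sc η α).prod κ).map (scaledStep (scaledOp T θstar α) α) = sc η α := by
    intro κ hκ a ha η hη
    filter_upwards [Ioc_mem_nhdsGT ha] with α hα
    obtain ⟨_, h2, h3⟩ := hη α hα
    have := hκ.isProbabilityMeasure
    have hf : Measurable fun x : EuclideanSpace ℝ (Fin d) => (√α)⁻¹ • (x - θstar) := by fun_prop
    exact ⟨Measure.isProbabilityMeasure_map hf.aemeasurable,
      integrable_norm_sq_map θstar _ h2, map_scaledStep_of_stationary hTc hα.1 h3⟩
  have hw : IsNoise νw := ⟨inferInstance, hνint, hνmean, hν4⟩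
  have hρ := hstat νw hw α₁ hα₁ μ hμ
  have hprob : ∀ᶠ α in 𝓝[>] 0, IsProbabilityMeasure (sc μ α) := hρ.mono fun α h => h.1
  obtain ⟨⟨K, hK, hKb⟩, hb⟩ := hw.exists_lpBound_and_eventually_near hc hγ0.le hγ1 hU
    (scaledOp_zero hfix) hG hG0 hUG hρ
  have hσ : ∀ τ, IsProbabilityMeasure (gaussianLimit νw τ) := fun τ => inferInstance
  obtain ⟨ν, hν, hνK, hlim⟩ := exists_limit_of_cauchy hc hK (hprob.and hKb) fun η hη =>
    eventually_near_prod hσ hc hγ0.le hγ1 hG hK hK (hprob.and hKb) (hprob.and hKb) hb hb hη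
  have hν2 := integrable_norm_sq_of_lpBound hc hK hνK
  refine ⟨ν, ⟨hν, hν2, tendsto_w2dist_of_near hc hprob hlim⟩, ?_, ?_, ?_⟩
  · intro ν' hν' hν'2 hlim'
    obtain ⟨K', hK', hνK'⟩ := exists_lpBound_of_integrable hc hν'2
    refine Near.eq_of_forall hc fun η hη => ?_
    obtain ⟨α, h1, h2, h3, h4⟩ := ((hlim'.eventually_lt_const (half_pos hη)).and
      ((hlim (η / 2) (half_pos hη)).and (hprob.and hKb))).exists
    have h5 : Near c (sc μ α) ν' (η / 2) := Near.of_w2dist_lt hc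
      (Near.exists_of_integrable hc h4 hνK' hK hK') (add_nonneg hK hK') h1
    exact ((h5.symm hc).trans hc h2 (half_pos hη).le (half_pos hη).le).mono_bound
      (add_halves η).le
  · intro νw' hp' hint' hmean' h4' hcov a ha μ' hμ'
    have hw' : IsNoise νw' := ⟨hp', hint', hmean', h4'⟩
    have hρ' := hstat νw' hw' a ha μ' hμ'
    have hprob' : ∀ᶠ α in 𝓝[>] 0, IsProbabilityMeasure (sc μ' α) := hρ'.mono fun α h => h.1
    obtain ⟨⟨K', hK', hKb'⟩, hb'⟩ := hw'.exists_lpBound_and_eventually_near hc hγ0.le hγ1 hU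
      (scaledOp_zero hfix) hG hG0 hUG hρ'
    have hb'' : ∀ ζ > 0, ∀ᶠ τ in 𝓝[>] 0, ∀ᶠ α in 𝓝[>] 0,
        Near c (sc μ' α) (eulerLaw G τ (sc μ' α) (gaussianLimit νw τ)) (τ * ζ) := by
      intro ζ hζ
      filter_upwards [hb' ζ hζ, self_mem_nhdsWithin] with τ h1 h2
      rwa [hw.gaussianLimit_congr hw' hcov (le_of_lt h2)] at h1
    refine tendsto_w2dist_of_near hc hprob' fun η hη => ?_
    have hprod := eventually_near_prod hσ hc hγ0.le hγ1 hG hK' hK (hprob'.and hKb')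
      (hprob.and hKb) hb'' hb (half_pos hη)
    filter_upwards [hprod.curry, hprob'] with α h1 _
    obtain ⟨β, h2, h3, _⟩ := (h1.and ((hlim (η / 2) (half_pos hη)).and hprob)).exists
    exact (h2.trans hc h3 (half_pos hη).le (half_pos hη).le).mono_bound (add_halves η).le
  · have hνi := integrable_id_of_norm_sq hν2
    refine tendsto_order.2 ⟨fun b hb => Eventually.of_forall fun α => ?_, fun b hb => ?_⟩
    · exact hb.trans_le (by positivity)
    · have hη : 0 < b / (2 * M) := by positivity
      filter_upwards [hlim _ hη, hρ, Ioc_mem_nhdsGT hα₁] with α h1 h2 hα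
      obtain ⟨_, hρ2, -⟩ := h2
      obtain ⟨_, hμ2, -⟩ := hμ α hα
      have hs : 0 < √α := Real.sqrt_pos.2 hα.1
      have hμi := integrable_id_of_norm_sq hμ2
      have h3 := h1.norm_integral_sub_le (f := fun x => x) hc hM.le hcM hη.le zero_le_one
        (fun x y => (one_mul _).ge) (integrable_id_of_norm_sq hρ2) hνi
      have hf : Measurable fun x : EuclideanSpace ℝ (Fin d) => (√α)⁻¹ • (x - θstar) := by
        fun_prop
      have h4 : ∫ x, x ∂(sc μ α) = (√α)⁻¹ • (∫ x, x ∂(μ α) - θstar) := by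
        refine (integral_map hf.aemeasurable continuous_id.aestronglyMeasurable).trans ?_
        simp only [id_eq]
        rw [integral_smul,
          integral_sub hμi (integrable_const _), integral_const, probReal_univ, one_smul]
      have h5 : ∫ x, x ∂(μ α) - θstar - √α • ∫ y, y ∂ν
          = √α • (∫ x, x ∂(sc μ α) - ∫ y, y ∂ν) := by
        rw [h4, smul_sub, smul_smul, mul_inv_cancel₀ hs.ne', one_smul]
      rw [h5, norm_smul, Real.norm_of_nonneg hs.le, ← mul_assoc, inv_mul_cancel₀ hs.ne', one_mul]
      refine h3.trans_lt ?_
      rw [one_mul, mul_div_assoc', mul_comm M b, mul_comm 2 M, ← div_div,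
        mul_div_cancel_right₀ _ hM.ne']
      linarith
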